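/- arXiv:1110.6140 — 2 statements merged into one kernel-verified Lean document; each statement's English description precedes it below -/
import Mathlib

section
/- There exists a nonempty Π⁰₁ closed subset Q of the square [0,1]² ⊆ ℝ² such that the subspace Q is contractible and locally contractible, and there is a real ε > 0 such that every nonempty connected computable closed set B ⊆ Q satisfies d_H(B, Q) ≥ ε (so Q *-includes no nonempty connected computable closed subset). -/
open Set Metric

section TopDefs

variable {α : Type*} [TopologicalSpace α]

/-- `A ⊆ α` is an arc with endpoints `x` and `y`:
a homeomorphic (continuous injective) image of `[0,1]` sending `0 ↦ x`, `1 ↦ y`. -/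
def IsArc (A : Set α) (x y : α) : Prop :=
  ∃ f : Set.Icc (0:ℝ) 1 → α, Continuous f ∧ Function.Injective f ∧
    Set.range f = A ∧ f ⟨0, by norm_num⟩ = x ∧ f ⟨1, by norm_num⟩ = y

/-- A continuum: a nonempty compact connected set. -/
def IsContinuum (X : Set α) : Prop := IsCompact X ∧ IsConnected X

/-- Any two distinct points of `X` are endpoints of an arc contained in `X`. -/
def ArcwiseConnectedSet (X : Set α) : Prop :=
  ∀ x ∈ X, ∀ y ∈ X, x ≠ y → ∃ A, A ⊆ X ∧ IsArc A x y

/-- `X` is unicoherent: for all closed connected `A, B ⊆ X` with `A ∪ B = X`,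
the intersection `A ∩ B` is connected. -/
def UnicoherentSet (X : Set α) : Prop :=
  ∀ A B : Set α, A ⊆ X → B ⊆ X → IsClosed A → IsClosed B →
    IsConnected A → IsConnected B → A ∪ B = X → IsConnected (A ∩ B)

/-- Every subcontinuum of `X` is unicoherent. -/
def HereditarilyUnicoherent (X : Set α) : Prop :=
  ∀ Y, Y ⊆ X → IsContinuum Y → UnicoherentSet Y

/-- A dendroid: an arcwise connected, hereditarily unicoherent continuum. -/
def IsDendroid (X : Set α) : Prop :=
  IsContinuum X ∧ ArcwiseConnectedSet X ∧ HereditarilyUnicoherent X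

/-- The unit circle `S¹`. -/
def unitCircle : Set (EuclideanSpace ℝ (Fin 2)) := Metric.sphere 0 1

/-- A dendrite: a locally connected continuum containing no subset homeomorphic to `S¹`. -/
def IsDendrite (X : Set α) : Prop :=
  IsContinuum X ∧ LocallyConnectedSpace ↥X ∧
    ∀ S : Set α, S ⊆ X → IsEmpty (↥S ≃ₜ ↥unitCircle)

/-- `x` and `y` lie in the same arc-component of `Y`. -/
def SameArcComponent (Y : Set α) (x y : α) : Prop :=
  x = y ∨ ∃ A, A ⊆ Y ∧ IsArc A x y

/-- `x` is a ramification point of `X`: `X \ {x}` has at least three arc-components. -/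
def IsRamificationPoint (X : Set α) (x : α) : Prop :=
  x ∈ X ∧ ∃ u v w, u ∈ X \ {x} ∧ v ∈ X \ {x} ∧ w ∈ X \ {x} ∧
    ¬ SameArcComponent (X \ {x}) u v ∧ ¬ SameArcComponent (X \ {x}) u w ∧
    ¬ SameArcComponent (X \ {x}) v w

/-- A tree (as a continuum): a dendrite with finitely many ramification points. -/
def IsTreeContinuum (X : Set α) : Prop :=
  IsDendrite X ∧ {x | IsRamificationPoint X x}.Finite

end TopDefs

section CompDefs

/-- The rational open ball in `ℝ²` coded by `((q₁, q₂), r)`. -/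
def ballOfCode (c : (ℚ × ℚ) × ℚ) : Set (ℝ × ℝ) :=
  {x | dist x (((c.1.1 : ℝ), (c.1.2 : ℝ)) : ℝ × ℝ) < (c.2 : ℝ)}

/-- A closed set `F ⊆ ℝ²` is `Π⁰₁` if it is the complement of the union of the rational
open balls coded by some c.e. set of codes. -/
def IsPi01Closed (F : Set (ℝ × ℝ)) : Prop :=
  ∃ W : (ℚ × ℚ) × ℚ → Prop, REPred W ∧ F = Set.univ \ ⋃ c ∈ {c | W c}, ballOfCode c

/-- `F ⊆ ℝ²` is c.e. closed if the set of codes of rational open balls meeting `F` is c.e. -/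
def IsCEClosed (F : Set (ℝ × ℝ)) : Prop :=
  REPred (fun c : (ℚ × ℚ) × ℚ => (F ∩ ballOfCode c).Nonempty)

/-- A computable closed subset of `ℝ²`: both `Π⁰₁` and c.e. closed. -/
def IsComputableClosed (F : Set (ℝ × ℝ)) : Prop :=
  IsPi01Closed F ∧ IsCEClosed F

/-- A point of `ℝ²` is computable if the set of codes of rational open balls
containing it is c.e. -/
def IsComputablePoint (x : ℝ × ℝ) : Prop :=
  REPred (fun c : (ℚ × ℚ) × ℚ => x ∈ ballOfCode c)

end CompDefs

section PsiDefs

/-- A tree of binary strings: a set of finite binary strings closed under prefixes. -/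
def IsTreeOfStrings (T : Set (List Bool)) : Prop :=
  ∀ σ ∈ T, ∀ τ : List Bool, τ <+: σ → τ ∈ T

/-- The point `ψ(σ) ∈ ℝ²` associated with the binary string `σ`. -/
noncomputable def psiPt (σ : List Bool) : ℝ × ℝ :=
  ((3:ℝ) ^ (-(σ.length : ℤ)) / 2 +
      2 * ∑ i ∈ Finset.range σ.length,
        (if σ.getD i false then (3:ℝ) ^ (-((i : ℤ) + 1)) else 0),
    (2:ℝ) ^ (-(σ.length : ℤ)))

/-- The planar embedding `Ψ(T)` of a tree `T` of binary strings: the closure of the union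
of the segments from `ψ(σ⁻)` to `ψ(σ)` over nonempty `σ ∈ T` (together with the points
`ψ(σ)`, `σ ∈ T`, which makes no difference except for the degenerate trees `∅`, `{⟨⟩}`). -/
noncomputable def PsiSet (T : Set (List Bool)) : Set (ℝ × ℝ) :=
  closure (psiPt '' T ∪ ⋃ σ ∈ T, ⋃ (_ : σ ≠ []), segment ℝ (psiPt σ.dropLast) (psiPt σ))

end PsiDefs

/-- A space is locally contractible if every neighbourhood `U` of every point contains a
neighbourhood `V` of that point such that the inclusion `V ↪ U` is null-homotopic. -/
def LocallyContractibleSpace' (X : Type*) [TopologicalSpace X] : Prop :=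
  ∀ (x : X) (U : Set X), U ∈ nhds x → ∃ V ∈ nhds x, ∃ hVU : V ⊆ U,
    ∃ u : ↥U, ContinuousMap.Homotopic
      ⟨Set.inclusion hVU, continuous_inclusion hVU⟩ (ContinuousMap.const ↥V u)

/-!
Let `A` and `B` be disjoint computably inseparable c.e. sets of natural numbers. Start from the
strip over `[0, 1]` below the graph of `|x - 1/2|` and single out the columns `x = 1/2 + 4⁻ⁿ⁻¹`. At
the `n`-th column lower the ceiling to height `0` if `n ∈ A`, and lift the floor above the lower
part of the column if `n ∈ B`, in both cases by a wedge of slope one whose apex is on the column.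
Wedges are carved out only when `n` is enumerated, so the resulting corridor is `Π⁰₁`. Its floor and
ceiling are graphs of Lipschitz functions, the floor weakly below the ceiling because `A` and `B`
are disjoint and the columns are far apart compared with the wedges; hence the corridor is a retract
of the plane, so it is contractible and locally contractible.

A connected subset at Hausdorff distance less than `1/4` from the corridor reaches both ends and
therefore crosses every column. If it is also c.e. closed, one can wait until it is seen to meet one
of two balls covering the `n`-th column, the lower of which is missed by the corridor if `n ∈ B` and
the upper of which is missed if `n ∈ A`. The answer would computably separate `A` from `B`.
-/

/-! ### Computably enumerable predicates and inseparable sets -/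

section Computability

open Encodable Denumerable Nat.Partrec

variable {α β ι : Type*} [Primcodable α] [Primcodable β] [Primcodable ι]

theorem rePred_comp {p : β → Prop} {f : α → β} (hp : REPred p) (hf : Computable f) :
    REPred fun a => p (f a) :=
  Partrec.comp hp hf

theorem rePred_exists_mem {f : α →. β} {p : α × β → Prop} (hf : Partrec f) (hp : REPred p) :
    REPred fun a => ∃ b ∈ f a, p (a, b) :=
  (hf.bind (Partrec.to₂ hp)).dom_re.of_eq fun a => by simp [Part.dom_iff_mem]

theorem rePred_and {p q : α → Prop} (hp : REPred p) (hq : REPred q) :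
    REPred fun a => p a ∧ q a :=
  (rePred_exists_mem hp (rePred_comp hq Computable.fst)).of_eq fun a => by simp

theorem rePred_or {p q : α → Prop} (hp : REPred p) (hq : REPred q) :
    REPred fun a => p a ∨ q a := by
  obtain ⟨k, hk, hspec⟩ := Partrec.merge' hp hq
  exact hk.dom_re.of_eq fun a => (hspec a).2.trans (by simp [Part.dom_iff_mem])

theorem rePred_exists_nat {t : α → ℕ → Bool} (ht : Computable₂ t) :
    REPred fun a => ∃ n, t a n = true :=
  (Partrec.rfind ht.partrec₂).dom_re.of_eq fun a => by simp [Nat.rfind_dom]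

theorem rePred_iff_exists_nat {p : α → Prop} :
    REPred p ↔ ∃ t : α → ℕ → Bool, Computable₂ t ∧ ∀ a, p a ↔ ∃ n, t a n = true := by
  refine ⟨fun hp => ?_, fun ⟨t, ht, hpt⟩ => (rePred_exists_nat ht).of_eq fun a => (hpt a).symm⟩
  obtain ⟨c, hc⟩ := Code.exists_code.1 hp
  refine ⟨fun a n => (Code.evaln n c (encode a)).isSome, ?_, fun a => ?_⟩
  · have heval := Code.primrec_evaln.comp
      (Primrec.pair (Primrec.pair Primrec.snd (Primrec.const c))
        (Primrec.encode.comp (Primrec.fst (α := α) (β := ℕ))))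
    exact (Primrec.option_isSome.comp heval).to_comp
  · have hdom : p a ↔ (c.eval (encode a)).Dom := by simp [hc, Part.dom_iff_mem]
    simp only [hdom, Part.dom_iff_mem, Code.evaln_complete, Option.isSome_iff_exists,
      Option.mem_def]
    exact exists_comm

theorem rePred_exists {p : α × ι → Prop} (hp : REPred p) : REPred fun a => ∃ i, p (a, i) := by
  obtain ⟨t, ht, hpt⟩ := rePred_iff_exists_nat.1 hp
  -- `m` ranges over the pairs of a code of `i` and a witness for `p (a, i)`.
  let s (a : α) (m : ℕ) : Bool :=
    ((decode (α := ι) m.unpair.1).map fun i => t (a, i) m.unpair.2).getD false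
  have hs : Computable₂ s := by
    refine Computable.option_getD (Computable.option_map ?_ ?_) (Computable.const false)
    · exact Computable.decode.comp
        (Primrec.fst.comp (Primrec.unpair.comp Primrec.snd)).to_comp
    · exact ht.comp
        (Computable.pair (Computable.fst.comp Computable.fst) Computable.snd)
        (Primrec.snd.comp (Primrec.unpair.comp (Primrec.snd.comp Primrec.fst))).to_comp
  refine (rePred_exists_nat hs).of_eq fun a => ⟨fun ⟨m, hm⟩ => ?_, fun ⟨i, hi⟩ => ?_⟩
  · obtain ⟨i, -, hi⟩ : ∃ i, decode m.unpair.1 = some i ∧ t (a, i) m.unpair.2 = true := by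
      simpa [s, Option.getD_eq_iff] using hm
    exact ⟨i, (hpt _).2 ⟨_, hi⟩⟩
  · obtain ⟨n, hn⟩ := (hpt _).1 hi
    exact ⟨Nat.pair (encode i) n, by simp [s, hn]⟩

theorem computablePred_comp {p : β → Prop} {f : α → β} (hp : ComputablePred p)
    (hf : Computable f) : ComputablePred fun a => p (f a) := by
  obtain ⟨t, ht, rfl⟩ := ComputablePred.computable_iff.1 hp
  exact ComputablePred.computable_iff.2 ⟨fun a => t (f a), ht.comp hf, rfl⟩

theorem computablePred_eq {f g : α → β} (hf : Computable f) (hg : Computable g) :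
    ComputablePred fun a => f a = g a := by
  classical
  exact ComputablePred.computable_iff.2 ⟨fun a => decide (f a = g a),
    Primrec.eq.decide.to_comp.comp hf hg, by simp⟩

theorem computable_of_graph {f : α → β} (hf : ComputablePred fun x : α × β => f x.1 = x.2) :
    Computable f := by
  obtain ⟨t, ht, hft⟩ := ComputablePred.computable_iff.1 hf
  have hgraph (a : α) (b : β) : t (a, b) = true ↔ f a = b := (iff_of_eq (congrFun hft (a, b))).symm
  let search (a : α) (n : ℕ) : Option β :=
    (decode (α := β) n).bind fun b => cond (t (a, b)) (some b) none
  have hsearch : Computable₂ search :=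
    Computable.option_bind (Computable.decode.comp Computable.snd)
      (Computable.cond
        (ht.comp (Computable.pair (Computable.fst.comp Computable.fst) Computable.snd))
        (Computable.option_some.comp Computable.snd) (Computable.const none))
  have hsound (a : α) (n : ℕ) (b : β) (hb : b ∈ search a n) : f a = b := by
    obtain ⟨b', -, hb'⟩ := Option.mem_bind_iff.1 hb
    cases htb : t (a, b') <;> simp only [htb, cond_true, cond_false, Option.mem_def, reduceCtorEq,
      Option.some.injEq] at hb'
    exact hb' ▸ (hgraph a b').1 htb
  refine (Partrec.rfindOpt hsearch).of_eq_tot fun a => ?_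
  obtain ⟨b, hb⟩ := Part.dom_iff_mem.1 <| Nat.rfindOpt_dom (f := search a) |>.2
    ⟨encode (f a), f a, by simp [search, (hgraph a (f a)).2 rfl]⟩
  obtain ⟨n, hn⟩ := Nat.rfindOpt_spec hb
  rwa [hsound a n b hn]

/-- Two sets of natural numbers are computably separable if some total computable Boolean function
is `true` on the first and `false` on the second. -/
def ComputablySeparable (A B : Set ℕ) : Prop :=
  ∃ f : ℕ → Bool, Computable f ∧ (∀ n ∈ A, f n = true) ∧ ∀ n ∈ B, f n = false

theorem computablySeparable_of_rePred {A B : Set ℕ} {P R : ℕ → Prop} (hP : REPred P)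
    (hR : REPred R) (hcover : ∀ n, P n ∨ R n) (hA : ∀ n ∈ A, ¬ R n) (hB : ∀ n ∈ B, ¬ P n) :
    ComputablySeparable A B := by
  obtain ⟨k, hk, hspec⟩ := Partrec.merge' (Partrec.map hP (Computable.const true).to₂)
    (Partrec.map hR (Computable.const false).to₂)
  have hdom (n : ℕ) : (k n).Dom := (hspec n).2.2 <| (hcover n).imp (fun h => ⟨h, trivial⟩)
    fun h => ⟨h, trivial⟩
  have hval (n : ℕ) : P n ∧ (k n).get (hdom n) = true ∨ R n ∧ (k n).get (hdom n) = false := by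
    have hmem := (hspec n).1 _ (Part.get_mem (hdom n))
    simp only [Part.mem_map_iff, Part.mem_assert_iff] at hmem
    rcases hmem with ⟨_, ⟨hPn, -⟩, htrue⟩ | ⟨_, ⟨hRn, -⟩, hfalse⟩
    · exact Or.inl ⟨hPn, htrue.symm⟩
    · exact Or.inr ⟨hRn, hfalse.symm⟩
  refine ⟨fun n => (k n).get (hdom n), hk.of_eq_tot fun n => Part.get_mem (hdom n),
    fun n hn => ?_, fun n hn => ?_⟩
  · exact ((hval n).resolve_right fun h => hA n hn h.1).2
  · exact ((hval n).resolve_left fun h => hB n hn h.1).2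

theorem exists_disjoint_rePred_not_computablySeparable :
    ∃ A B : Set ℕ, REPred (· ∈ A) ∧ REPred (· ∈ B) ∧ Disjoint A B ∧ ¬ ComputablySeparable A B := by
  let diagonal (v : ℕ) : Set ℕ := {n | v ∈ (ofNat Code n).eval n}
  have hre (v : ℕ) : REPred (· ∈ diagonal v) := by
    have heval : Partrec fun n : ℕ => (ofNat Code n).eval n :=
      Code.eval_part.comp (Computable.ofNat Code) Computable.id
    refine (rePred_exists_mem heval
      (computablePred_eq Computable.snd (Computable.const v)).to_re).of_eq fun n => ?_
    simp [diagonal]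
  refine ⟨diagonal 0, diagonal 1, hre 0, hre 1, Set.disjoint_left.2 fun n h₀ h₁ =>
    zero_ne_one (Part.mem_unique h₀ h₁), ?_⟩
  rintro ⟨f, hf, hf₀, hf₁⟩
  have hflip : Computable fun n => cond (f n) 1 0 :=
    Computable.cond hf (Computable.const 1) (Computable.const 0)
  obtain ⟨c, hc⟩ := Code.exists_code.1 (Partrec.nat_iff.1 hflip.partrec)
  have hceval (v : ℕ) : encode c ∈ diagonal v ↔ v = cond (f (encode c)) 1 0 := by
    simp [diagonal, hc]
  cases hfc : f (encode c)
  · have := hf₀ (encode c) ((hceval 0).2 (by simp [hfc]))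
    simp [hfc] at this
  · have := hf₁ (encode c) ((hceval 1).2 (by simp [hfc]))
    simp [hfc] at this

end Computability

/-! ### Computable arithmetic on the rationals -/

section Rationals

open Encodable Denumerable

theorem encode_int_natCast (n : ℕ) : encode (n : ℤ) = 2 * n := rfl

theorem encode_int_negSucc (n : ℕ) : encode (Int.negSucc n) = 2 * n + 1 := rfl

theorem primrecPred_nat_even : PrimrecPred fun n : ℕ => n % 2 = 0 :=
  Primrec.eq.comp (Primrec.nat_mod.comp Primrec.id (Primrec.const 2)) (Primrec.const 0)

theorem primrec_nat_half : Primrec fun n : ℕ => n / 2 :=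
  Primrec.nat_div.comp Primrec.id (Primrec.const 2)

theorem primrec_int_toNat : Primrec Int.toNat := by
  refine ((Primrec.ite primrecPred_nat_even primrec_nat_half (Primrec.const 0)).comp
    Primrec.encode).of_eq fun z => ?_
  cases z using Int.rec with
  | ofNat n => simp [encode_int_natCast]
  | negSucc n => simp [encode_int_negSucc]

theorem primrec_int_toNat_neg : Primrec fun z : ℤ => (-z).toNat := by
  refine ((Primrec.ite primrecPred_nat_even (Primrec.const 0)
    (Primrec.succ.comp primrec_nat_half)).comp Primrec.encode).of_eq fun z => ?_
  cases z using Int.rec with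
  | ofNat n => simp [encode_int_natCast]
  | negSucc n =>
    simp only [encode_int_negSucc, Int.neg_negSucc, Int.toNat_natCast]
    grind

theorem primrec₂_int_subNatNat : Primrec₂ Int.subNatNat := by
  have hsub : Primrec fun p : ℕ × ℕ => 2 * (p.1 - p.2) :=
    Primrec.nat_mul.comp (Primrec.const 2) Primrec.nat_sub
  have hneg : Primrec fun p : ℕ × ℕ => 2 * (p.2 - p.1 - 1) + 1 :=
    Primrec.succ.comp <| Primrec.nat_mul.comp (Primrec.const 2) <|
      Primrec.nat_sub.comp (Primrec.nat_sub.comp Primrec.snd Primrec.fst) (Primrec.const 1)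
  refine Primrec.encode_iff.1 <|
    (Primrec.ite (Primrec.nat_le.comp Primrec.snd Primrec.fst) hsub hneg).of_eq fun p => ?_
  split_ifs with hle
  · rw [Int.subNatNat_of_le hle]
    rfl
  · rw [Int.subNatNat_of_lt (not_le.1 hle)]
    rfl

theorem primrec_int_natCast : Primrec fun n : ℕ => (n : ℤ) :=
  (primrec₂_int_subNatNat.comp Primrec.id (Primrec.const 0)).of_eq fun n => by
    simp [Int.subNatNat_eq_coe]

theorem primrec₂_int_add : Primrec₂ fun x y : ℤ => x + y := by
  refine Primrec.of_eq (primrec₂_int_subNatNat.comp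
    (Primrec.nat_add.comp (primrec_int_toNat.comp Primrec.fst)
      (primrec_int_toNat.comp Primrec.snd))
    (Primrec.nat_add.comp (primrec_int_toNat_neg.comp Primrec.fst)
      (primrec_int_toNat_neg.comp Primrec.snd))) fun p => ?_
  dsimp only
  rw [Int.subNatNat_eq_coe]
  omega

theorem primrec₂_int_mul : Primrec₂ fun x y : ℤ => x * y := by
  have hpos₁ : Primrec fun p : ℤ × ℤ => p.1.toNat := primrec_int_toNat.comp Primrec.fst
  have hpos₂ : Primrec fun p : ℤ × ℤ => p.2.toNat := primrec_int_toNat.comp Primrec.snd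
  have hneg₁ : Primrec fun p : ℤ × ℤ => (-p.1).toNat := primrec_int_toNat_neg.comp Primrec.fst
  have hneg₂ : Primrec fun p : ℤ × ℤ => (-p.2).toNat := primrec_int_toNat_neg.comp Primrec.snd
  refine Primrec.of_eq (primrec₂_int_subNatNat.comp
    (Primrec.nat_add.comp (Primrec.nat_mul.comp hpos₁ hpos₂) (Primrec.nat_mul.comp hneg₁ hneg₂))
    (Primrec.nat_add.comp (Primrec.nat_mul.comp hpos₁ hneg₂)
      (Primrec.nat_mul.comp hneg₁ hpos₂))) fun p => ?_
  rw [Int.subNatNat_eq_coe]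
  conv_rhs => rw [← Int.toNat_sub_toNat_neg p.1, ← Int.toNat_sub_toNat_neg p.2]
  push_cast
  ring

theorem primrecRel_int_lt : PrimrecRel fun x y : ℤ => x < y := by
  refine PrimrecPred.of_eq (Primrec.nat_lt.comp
    (Primrec.nat_add.comp (primrec_int_toNat.comp Primrec.fst)
      (primrec_int_toNat_neg.comp Primrec.snd))
    (Primrec.nat_add.comp (primrec_int_toNat.comp Primrec.snd)
      (primrec_int_toNat_neg.comp Primrec.fst))) fun p => ?_
  omega

theorem computable_subtype_ofNat {s : Set ℕ} [DecidablePred (· ∈ s)] [Infinite s]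
    (hs : ComputablePred (· ∈ s)) : Computable fun n => (Nat.Subtype.ofNat s n : ℕ) := by
  have hnext (x : ℕ) : ∃ m, x + m + 1 ∈ s := by
    obtain ⟨y, hy, hxy⟩ := (Set.infinite_coe_iff.1 ‹Infinite s›).exists_gt x
    obtain ⟨m, rfl⟩ := Nat.exists_eq_add_of_lt hxy
    exact ⟨m, hy⟩
  have hsum : Computable fun p : ℕ × ℕ => p.1 + p.2 + 1 :=
    (Primrec.succ.comp (Primrec.nat_add.comp Primrec.fst Primrec.snd)).to_comp
  have hfind : Computable fun x : ℕ => Nat.find (hnext x) :=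
    Computable.find (computablePred_comp hs hsum) hnext
  refine (Computable.nat_rec Computable.id (Computable.const (Nat.Subtype.ofNat s 0 : ℕ))
    ((hsum.comp (Computable.pair Computable.id hfind)).comp
      (Computable.snd.comp Computable.snd)).to₂).of_eq fun n => ?_
  induction n with
  | zero => rfl
  | succ n ih =>
    simp only [id] at ih ⊢
    rw [ih]
    rfl

/-- `Denumerable.ofEncodableOfInfinite` renumbers the range of the given encoding, and the
renumbering is effectively invertible as soon as that range is decidable. -/
theorem computable_encode_of_ofEncodableOfInfinite {α : Type*} [e : Encodable α] [Infinite α]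
    (hrange : ComputablePred (· ∈ Set.range (encode : α → ℕ))) :
    letI := ofEncodableOfInfinite α
    Computable e.encode := by
  let := decidableRangeEncode α
  have : Infinite (Set.range (encode : α → ℕ)) :=
    Infinite.of_injective _ (Equiv.ofInjective _ encode_injective).injective
  let := ofEncodableOfInfinite α
  have hofNat (n : ℕ) :
      e.encode (ofNat α n) = (Nat.Subtype.ofNat (Set.range e.encode) n : ℕ) :=
    congrArg Subtype.val ((@equivRangeEncode α e).apply_symm_apply _)
  refine ((computable_subtype_ofNat hrange).comp Computable.encode).of_eq fun a => ?_
  rw [← hofNat, ofNat_encode]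

theorem encode_rat_eq (q : ℚ) :
    Rat.instEncodable.encode q = Nat.pair (encode q.num) q.den := by
  cases q
  rfl

theorem int_natAbs_eq_encode (z : ℤ) : z.natAbs = (encode z + 1) / 2 := by
  cases z using Int.rec with
  | ofNat n => grind [encode_int_natCast]
  | negSucc n => grind [encode_int_negSucc]

theorem nat_coprime_iff_forall_lt {m n : ℕ} (hn : 0 < n) :
    Nat.Coprime m n ↔ ∀ d < n + 1, m % d = 0 → n % d = 0 → d = 1 := by
  simp only [← Nat.dvd_iff_mod_eq_zero]
  exact ⟨fun h d _ hm hn => Nat.eq_one_of_dvd_coprimes h hm hn, fun h =>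
    h _ (Nat.lt_succ_of_le (Nat.gcd_le_right m hn)) (Nat.gcd_dvd_left m n) (Nat.gcd_dvd_right m n)⟩

theorem mem_range_encode_rat_iff (k : ℕ) :
    k ∈ Set.range Rat.instEncodable.encode ↔ 0 < k.unpair.2 ∧
      ∀ d < k.unpair.2 + 1, (k.unpair.1 + 1) / 2 % d = 0 → k.unpair.2 % d = 0 → d = 1 := by
  constructor
  · rintro ⟨q, rfl⟩
    rw [encode_rat_eq, Nat.unpair_pair, ← int_natAbs_eq_encode]
    exact ⟨q.den_pos, (nat_coprime_iff_forall_lt q.den_pos).1 q.reduced⟩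
  · rintro ⟨hden, hcoprime⟩
    obtain ⟨z, hz⟩ : ∃ z : ℤ, encode z = k.unpair.1 := ⟨ofNat ℤ _, encode_ofNat _⟩
    rw [← hz, ← int_natAbs_eq_encode, ← nat_coprime_iff_forall_lt hden] at hcoprime
    exact ⟨⟨z, k.unpair.2, hden.ne', hcoprime⟩, by simp [encode_rat_eq, hz]⟩

theorem computablePred_mem_range_encode_rat :
    ComputablePred (· ∈ Set.range Rat.instEncodable.encode) := by
  have hden : Primrec fun k : ℕ => k.unpair.2 := Primrec.snd.comp Primrec.unpair
  have hnum : Primrec fun k : ℕ => (k.unpair.1 + 1) / 2 :=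
    primrec_nat_half.comp (Primrec.succ.comp (Primrec.fst.comp Primrec.unpair))
  have hdvd {f : ℕ → ℕ} (hf : Primrec f) : PrimrecPred fun p : ℕ × ℕ => f p.2 % p.1 = 0 :=
    Primrec.eq.comp (Primrec.nat_mod.comp (hf.comp Primrec.snd) Primrec.fst) (Primrec.const 0)
  have hdivisor : PrimrecRel fun d k : ℕ =>
      (k.unpair.1 + 1) / 2 % d = 0 → k.unpair.2 % d = 0 → d = 1 := by
    refine PrimrecPred.of_eq ((hdvd hnum).not.or ((hdvd hden).not.or
      (Primrec.eq.comp Primrec.fst (Primrec.const 1)))) fun p => ?_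
    simp only [imp_iff_not_or]
  obtain ⟨_, hcomp⟩ := (Primrec.nat_lt.comp (Primrec.const 0) hden).and
    (hdivisor.forall_lt.comp (Primrec.succ.comp hden) Primrec.id)
  exact ComputablePred.computable_iff.2 ⟨_, hcomp.to_comp, by
    funext k
    simpa using mem_range_encode_rat_iff k⟩

theorem computable_encode_rat : Computable Rat.instEncodable.encode :=
  computable_encode_of_ofEncodableOfInfinite computablePred_mem_range_encode_rat

theorem computable_rat_num : Computable Rat.num :=
  Computable.encode_iff.1 <| ((Primrec.fst.comp Primrec.unpair).to_comp.comp
    computable_encode_rat).of_eq fun q => by simp [encode_rat_eq]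

theorem computable_rat_den : Computable Rat.den :=
  ((Primrec.snd.comp Primrec.unpair).to_comp.comp
    computable_encode_rat).of_eq fun q => by simp [encode_rat_eq]

section RatArithmetic

variable {α : Type*} [Primcodable α] {f g : α → ℚ}

theorem computable_rat_den_cast (hf : Computable f) : Computable fun a => ((f a).den : ℤ) :=
  primrec_int_natCast.to_comp.comp (computable_rat_den.comp hf)

theorem computable_intCast_div {m n : α → ℤ} (hm : Computable m) (hn : Computable n)
    (hn₀ : ∀ a, n a ≠ 0) : Computable fun a => (m a : ℚ) / n a := by
  have hmul := primrec₂_int_mul.to_comp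
  have hcross : ComputablePred fun x : α × ℚ => m x.1 * x.2.den = x.2.num * n x.1 :=
    computablePred_eq (hmul.comp (hm.comp Computable.fst) (computable_rat_den_cast Computable.snd))
      (hmul.comp (computable_rat_num.comp Computable.snd) (hn.comp Computable.fst))
  refine computable_of_graph (hcross.of_eq fun x => ?_)
  have hn_ne : (n x.1 : ℚ) ≠ 0 := Int.cast_ne_zero.2 (hn₀ x.1)
  rw [← Rat.num_div_den x.2, div_eq_div_iff hn_ne (by simp), Rat.num_div_den]
  exact_mod_cast Iff.rfl

theorem computable_rat_add (hf : Computable f) (hg : Computable g) :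
    Computable fun a => f a + g a := by
  have hmul := primrec₂_int_mul.to_comp
  have hfd := computable_rat_den_cast hf
  have hgd := computable_rat_den_cast hg
  refine (computable_intCast_div
    (primrec₂_int_add.to_comp.comp (hmul.comp (computable_rat_num.comp hf) hgd)
      (hmul.comp hfd (computable_rat_num.comp hg)))
    (hmul.comp hfd hgd) (by simp)).of_eq fun a => ?_
  push_cast
  rw [← div_add_div _ _ (by simp) (by simp), Rat.num_div_den, Rat.num_div_den]

theorem computable_rat_mul (hf : Computable f) (hg : Computable g) :
    Computable fun a => f a * g a := by
  have hmul := primrec₂_int_mul.to_comp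
  refine (computable_intCast_div
    (hmul.comp (computable_rat_num.comp hf) (computable_rat_num.comp hg))
    (hmul.comp (computable_rat_den_cast hf) (computable_rat_den_cast hg))
    (by simp)).of_eq fun a => ?_
  push_cast
  rw [← div_mul_div_comm, Rat.num_div_den, Rat.num_div_den]

theorem computable_rat_neg (hf : Computable f) : Computable fun a => -f a :=
  (computable_rat_mul (Computable.const (-1)) hf).of_eq fun a => neg_one_mul (f a)

theorem computable_rat_sub (hf : Computable f) (hg : Computable g) :
    Computable fun a => f a - g a :=
  (computable_rat_add hf (computable_rat_neg hg)).of_eq fun _ => (sub_eq_add_neg _ _).symm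

theorem computable_rat_pow {k : α → ℕ} (hf : Computable f) (hk : Computable k) :
    Computable fun a => f a ^ k a := by
  refine (Computable.nat_rec hk (Computable.const (1 : ℚ))
    (computable_rat_mul (Computable.snd.comp Computable.snd) (hf.comp Computable.fst)).to₂).of_eq
    fun a => ?_
  induction k a with
  | zero => simp
  | succ n ih => rw [pow_succ, ← ih]

theorem computablePred_rat_lt (hf : Computable f) (hg : Computable g) :
    ComputablePred fun a => f a < g a := by
  have hmul := primrec₂_int_mul.to_comp
  obtain ⟨_, hlt⟩ := primrecRel_int_lt
  refine ComputablePred.computable_iff.2 ⟨_, hlt.to_comp.comp (Computable.pair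
    (hmul.comp (computable_rat_num.comp hf) (computable_rat_den_cast hg))
    (hmul.comp (computable_rat_num.comp hg) (computable_rat_den_cast hf))), ?_⟩
  funext a
  simp [Rat.lt_iff]

theorem computable_rat_abs (hf : Computable f) : Computable fun a => |f a| := by
  obtain ⟨t, ht, hspec⟩ := ComputablePred.computable_iff.1
    (computablePred_rat_lt hf (Computable.const 0))
  have hneg (a : α) : f a < 0 ↔ t a = true := iff_of_eq (congrFun hspec a)
  refine (Computable.cond ht (computable_rat_neg hf) hf).of_eq fun a => ?_
  cases hta : t a
  · exact (abs_of_nonneg (not_lt.1 (by simp [hneg, hta]))).symm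
  · exact (abs_of_neg ((hneg a).2 hta)).symm

end RatArithmetic

end Rationals

/-! ### Closed sets cut out by c.e. families of inequalities -/

section Pi01

variable {ι : Type*} [Primcodable ι] {A : Set ι}

theorem isPi01Closed_of_mem_iff {F : Set (ℝ × ℝ)} {W : (ℚ × ℚ) × ℚ → Prop} (hW : REPred W)
    (hF : ∀ p, p ∈ F ↔ ∀ c, W c → p ∉ ballOfCode c) : IsPi01Closed F :=
  ⟨W, hW, by ext p; simpa using hF p⟩

theorem IsPi01Closed.inter {F G : Set (ℝ × ℝ)} (hF : IsPi01Closed F) (hG : IsPi01Closed G) :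
    IsPi01Closed (F ∩ G) := by
  obtain ⟨V, hV, rfl⟩ := hF
  obtain ⟨W, hW, rfl⟩ := hG
  refine isPi01Closed_of_mem_iff (rePred_or hV hW) fun p => ?_
  simp [or_imp, forall_and]

theorem isPi01Closed_setOf_forall_le_zero (hA : REPred (· ∈ A)) {f : ι → ℝ × ℝ → ℝ} {K : NNReal}
    (hf : ∀ i, LipschitzWith K (f i)) {g : ι × ℚ × ℚ → ℚ} (hg : Computable g)
    (hfg : ∀ i (q : ℚ × ℚ), f i (q.1, q.2) = g (i, q)) :
    IsPi01Closed {p | ∀ i ∈ A, f i p ≤ 0} := by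
  obtain ⟨k, hk⟩ := exists_nat_ge (K : ℝ)
  have hdiff (i : ι) (p : ℝ × ℝ) (c : (ℚ × ℚ) × ℚ) (hp : p ∈ ballOfCode c) :
      |f i p - g (i, c.1)| ≤ k * c.2 :=
    calc |f i p - g (i, c.1)| ≤ K * dist p (c.1.1, c.1.2) := by
          rw [← hfg, ← Real.dist_eq]; exact (hf i).dist_le_mul _ _
      _ ≤ k * c.2 := by gcongr; exact le_of_lt hp
  -- The Lipschitz bound makes `f i` positive on every ball where `g` beats `k` times the radius.
  let W (c : (ℚ × ℚ) × ℚ) : Prop := ∃ i, i ∈ A ∧ k * c.2 < g (i, c.1)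
  have hW : REPred W := by
    refine rePred_exists (p := fun x : ((ℚ × ℚ) × ℚ) × ι => x.2 ∈ A ∧ k * x.1.2 < g (x.2, x.1.1))
      (rePred_and (rePred_comp hA Computable.snd) (computablePred_rat_lt ?_ ?_).to_re)
    · exact computable_rat_mul (Computable.const _) (Computable.snd.comp Computable.fst)
    · exact hg.comp (Computable.pair Computable.snd (Computable.fst.comp Computable.fst))
  refine isPi01Closed_of_mem_iff hW fun p => ⟨?_, fun hp i hi => ?_⟩
  · rintro hp c ⟨i, hi, hc⟩ hpc
    have hc' : (k * c.2 : ℝ) < g (i, c.1) := by exact_mod_cast hc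
    linarith [hp i hi, neg_abs_le (f i p - g (i, c.1)), hdiff i p c hpc]
  · by_contra! hpos
    obtain ⟨r, hr₀, hr⟩ := exists_rat_btwn (show 0 < f i p / (2 * k + 1) by positivity)
    obtain ⟨q, hq⟩ := (Rat.denseRange_cast.prodMap Rat.denseRange_cast).exists_dist_lt p hr₀
    refine hp (q, r) ⟨i, hi, ?_⟩ hq
    rw [lt_div_iff₀ (by positivity)] at hr
    have hgr : (k * r : ℝ) < g (i, q) := by
      linarith [le_abs_self (f i p - g (i, q)), hdiff i p (q, r) hq]
    exact_mod_cast hgr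

theorem isPi01Closed_setOf_forall_wedge (hA : REPred (· ∈ A)) (a b : ℚ) {z h : ι → ℚ}
    (hz : Computable z) (hh : Computable h) :
    IsPi01Closed {p | ∀ i ∈ A, a * p.2 + b * |p.1 - z i| ≤ h i} := by
  have hlip (i : ι) : LipschitzWith (‖(a : ℝ)‖₊ * 1 + ‖(b : ℝ)‖₊ * (1 * 1) + 0)
      fun p : ℝ × ℝ => a * p.2 + b * |p.1 - z i| - h i :=
    (((lipschitzWith_smul (a : ℝ)).comp LipschitzWith.prod_snd).add
      ((lipschitzWith_smul (b : ℝ)).comp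
        ((LipschitzWith.dist_left (z i : ℝ)).comp LipschitzWith.prod_fst))).sub
      (LipschitzWith.const (h i : ℝ))
  have hg : Computable fun x : ι × ℚ × ℚ => a * x.2.2 + b * |x.2.1 - z x.1| - h x.1 := by
    have hx : Computable fun x : ι × ℚ × ℚ => x.2.1 := Computable.fst.comp Computable.snd
    have hy : Computable fun x : ι × ℚ × ℚ => x.2.2 := Computable.snd.comp Computable.snd
    exact computable_rat_sub
      (computable_rat_add (computable_rat_mul (Computable.const a) hy)
        (computable_rat_mul (Computable.const b)
          (computable_rat_abs (computable_rat_sub hx (hz.comp Computable.fst)))))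
      (hh.comp Computable.fst)
  simpa only [sub_nonpos] using
    isPi01Closed_setOf_forall_le_zero hA hlip hg fun i q => by push_cast; ring

end Pi01

/-! ### Retracts -/

section Retracts

open Function Topology

variable {X Y : Type*} [TopologicalSpace X] [TopologicalSpace Y]

theorem contractibleSpace_of_leftInverse [ContractibleSpace Y] (i : C(X, Y)) (r : C(Y, X))
    (hri : LeftInverse r i) : ContractibleSpace X := by
  rw [contractible_iff_id_nullhomotopic]
  have hcomp : r.comp ((ContinuousMap.id Y).comp i) = ContinuousMap.id X :=
    ContinuousMap.ext hri
  exact hcomp ▸ ((id_nullhomotopic Y).comp_left i).comp_right r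

theorem locallyContractibleSpace_of_leftInverse (hY : LocallyContractibleSpace Y)
    (i : C(X, Y)) (r : C(Y, X)) (hri : LeftInverse r i) : LocallyContractibleSpace X := by
  intro x U hU
  have hrU : r ⁻¹' U ∈ 𝓝 (i x) := r.continuous.continuousAt.preimage_mem_nhds (by rwa [hri x])
  obtain ⟨V, hVU, hV, hnull⟩ := hY (i x) (r ⁻¹' U) hrU
  have hiVU : i ⁻¹' V ⊆ U := fun y hy => hri y ▸ hVU hy
  refine ⟨i ⁻¹' V, hiVU, i.continuous.continuousAt.preimage_mem_nhds hV, ?_⟩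
  have hcomp : (r.restrictPreimage U).comp
      ((ContinuousMap.inclusion hVU).comp (i.restrictPreimage V)) =
      ContinuousMap.inclusion hiVU :=
    ContinuousMap.ext fun y => Subtype.ext (hri y)
  exact hcomp ▸ (hnull.comp_left _).comp_right _

theorem stronglyLocallyContractibleSpace_of_locallyConvexSpace (E : Type*) [AddCommGroup E]
    [Module ℝ E] [TopologicalSpace E] [ContinuousAdd E] [ContinuousSMul ℝ E]
    [LocallyConvexSpace ℝ E] : StronglyLocallyContractibleSpace E :=
  .of_bases (fun x => LocallyConvexSpace.convex_basis (𝕜 := ℝ) x) fun _ _ hs =>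
    hs.2.contractibleSpace ⟨_, mem_of_mem_nhds hs.1⟩

theorem locallyContractibleSpace'_iff : LocallyContractibleSpace' X ↔ LocallyContractibleSpace X :=
  forall₃_congr fun _ _ _ => exists_congr fun _ => exists_and_left.symm

/-- The part of `X × ℝ` over `S` that lies weakly between the graphs of `lo` and `hi`. Mathlib's
`regionBetween` is the analogue with open vertical intervals. -/
def closedRegionBetween (lo hi : X → ℝ) (S : Set X) : Set (X × ℝ) :=
  {p | p.1 ∈ S ∧ p.2 ∈ Set.Icc (lo p.1) (hi p.1)}

theorem exists_leftInverse_closedRegionBetween {S : Set X} {lo hi : X → ℝ} (ρ : C(X, S))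
    (hρ : ∀ x : S, ρ x = x) (hlo : Continuous lo) (hhi : Continuous hi)
    (hle : ∀ x ∈ S, lo x ≤ hi x) :
    ∃ r : C(X × ℝ, closedRegionBetween lo hi S), LeftInverse r Subtype.val := by
  let clamp (p : X × ℝ) : X × ℝ := (ρ p.1, max (lo (ρ p.1)) (min p.2 (hi (ρ p.1))))
  have hclamp (p : X × ℝ) : clamp p ∈ closedRegionBetween lo hi S :=
    ⟨(ρ p.1).2, le_max_left _ _, max_le (hle _ (ρ p.1).2) (min_le_right _ _)⟩
  refine ⟨⟨fun p => ⟨clamp p, hclamp p⟩, by fun_prop⟩, ?_⟩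
  rintro ⟨⟨x, y⟩, hx, hlo_le, hle_hi⟩
  have hρx : (ρ x : X) = x := congrArg Subtype.val (hρ ⟨x, hx⟩)
  exact Subtype.ext (Prod.ext hρx (by simp [clamp, hρx, min_eq_left hle_hi, max_eq_right hlo_le]))

end Retracts

/-! ### The corridor -/

section Corridor

open Function

/-- The distance `4⁻ⁿ⁻¹` of the `n`-th column of the corridor from the line `x = 1/2`. It decreases
fast enough that every other column is at distance at least `3/4` of it from the `n`-th one. -/
noncomputable def columnOffset (n : ℕ) : ℝ := (1 / 4) ^ (n + 1)

/-- The abscissa of the `n`-th column, the place where the corridor records whether `n` lies in one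
of the two sets it is built from. -/
noncomputable def column (n : ℕ) : ℝ := 1 / 2 + columnOffset n

/-- The corridor of `A` and `B`: a strip over `[0, 1]` below the graph of `|x - 1/2|`, pinched to
the bottom at the `n`-th column for `n ∈ A` and raised off the bottom there for `n ∈ B`. -/
def corridor (A B : Set ℕ) : Set (ℝ × ℝ) :=
  {p | p.1 ∈ Icc (0 : ℝ) 1 ∧ 0 ≤ p.2 ∧ p.2 ≤ |p.1 - 1 / 2| ∧
    (∀ n ∈ A, p.2 ≤ |p.1 - column n|) ∧
    ∀ n ∈ B, 3 / 4 * columnOffset n - |p.1 - column n| ≤ p.2}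

/-- The lower boundary of the corridor, as a function of the abscissa. -/
noncomputable def corridorFloor (B : Set ℕ) (x : ℝ) : ℝ :=
  sSup (insert 0 ((fun n => 3 / 4 * columnOffset n - |x - column n|) '' B))

/-- The upper boundary of the corridor, as a function of the abscissa. -/
noncomputable def corridorCeiling (A : Set ℕ) (x : ℝ) : ℝ :=
  infDist x (insert (1 / 2) (column '' A))

theorem columnOffset_pos (n : ℕ) : 0 < columnOffset n := by
  unfold columnOffset
  positivity

theorem columnOffset_le_quarter (n : ℕ) : columnOffset n ≤ 1 / 4 :=
  pow_le_of_le_one (by norm_num) (by norm_num) n.succ_ne_zero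

theorem columnOffset_le_of_lt {m n : ℕ} (hmn : m < n) : columnOffset n ≤ columnOffset m / 4 :=
  calc columnOffset n ≤ (1 / 4) ^ (m + 1 + 1) :=
        pow_le_pow_of_le_one (by norm_num) (by norm_num) (by omega)
    _ = columnOffset m / 4 := by unfold columnOffset; ring

theorem three_quarters_columnOffset_le {m n : ℕ} (hmn : m ≠ n) :
    3 / 4 * columnOffset m ≤ |column m - column n| := by
  have hdiff : column m - column n = columnOffset m - columnOffset n := by unfold column; ring
  rw [hdiff, le_abs]
  rcases hmn.lt_or_gt with hlt | hgt
  · left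
    linarith [columnOffset_le_of_lt hlt]
  · right
    linarith [columnOffset_le_of_lt hgt, columnOffset_pos m, columnOffset_pos n]

variable {A B : Set ℕ}

theorem corridorFloor_le_iff {x y : ℝ} : corridorFloor B x ≤ y ↔
    0 ≤ y ∧ ∀ n ∈ B, 3 / 4 * columnOffset n - |x - column n| ≤ y := by
  have hbdd : BddAbove (insert 0 ((fun n => 3 / 4 * columnOffset n - |x - column n|) '' B)) := by
    refine ⟨1, Set.forall_mem_insert.2 ⟨zero_le_one, Set.forall_mem_image.2 fun n _ => ?_⟩⟩
    linarith [columnOffset_le_quarter n, abs_nonneg (x - column n)]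
  rw [corridorFloor, csSup_le_iff hbdd (insert_nonempty _ _), Set.forall_mem_insert,
    Set.forall_mem_image]

theorem le_corridorCeiling_iff {x y : ℝ} : y ≤ corridorCeiling A x ↔
    y ≤ |x - 1 / 2| ∧ ∀ n ∈ A, y ≤ |x - column n| := by
  rw [corridorCeiling, le_infDist (insert_nonempty _ _)]
  exact Set.forall_mem_insert.trans (and_congr_right' Set.forall_mem_image)

theorem corridor_eq_closedRegionBetween :
    corridor A B = closedRegionBetween (corridorFloor B) (corridorCeiling A) (Icc 0 1) := by
  ext p
  simp only [corridor, closedRegionBetween, Set.mem_ofPred_eq, Set.mem_Icc, corridorFloor_le_iff,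
    le_corridorCeiling_iff]
  tauto

theorem lipschitzWith_corridorFloor : LipschitzWith 1 (corridorFloor B) := by
  refine LipschitzWith.of_le_add fun x y => corridorFloor_le_iff.2 ?_
  obtain ⟨hnonneg, hle⟩ := corridorFloor_le_iff.1 (le_refl (corridorFloor B y))
  refine ⟨by positivity, fun n hn => ?_⟩
  linarith [hle n hn, abs_sub_le y x (column n), Real.dist_eq y x, dist_comm x y]

theorem corridorFloor_le_corridorCeiling (hAB : Disjoint A B) (x : ℝ) :
    corridorFloor B x ≤ corridorCeiling A x := by
  refine corridorFloor_le_iff.2 ⟨infDist_nonneg, fun n hn => le_corridorCeiling_iff.2 ⟨?_, ?_⟩⟩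
  · have hcolumn : |column n - 1 / 2| = columnOffset n := by
      simp [column, abs_of_pos (columnOffset_pos n)]
    linarith [columnOffset_pos n, abs_sub_le (column n) x (1 / 2), abs_sub_comm x (column n)]
  · intro m hm
    linarith [three_quarters_columnOffset_le (hAB.ne_of_mem hm hn).symm,
      abs_sub_le (column n) x (column m), abs_sub_comm x (column n)]

theorem exists_leftInverse_corridor (hAB : Disjoint A B) :
    ∃ r : C(ℝ × ℝ, corridor A B), LeftInverse r Subtype.val := by
  rw [corridor_eq_closedRegionBetween]
  exact exists_leftInverse_closedRegionBetween ⟨projIcc 0 1 zero_le_one, continuous_projIcc⟩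
    (projIcc_val zero_le_one) lipschitzWith_corridorFloor.continuous (continuous_infDist_pt _)
    fun x _ => corridorFloor_le_corridorCeiling hAB x

theorem contractibleSpace_corridor (hAB : Disjoint A B) : ContractibleSpace (corridor A B) :=
  let ⟨r, hr⟩ := exists_leftInverse_corridor hAB
  contractibleSpace_of_leftInverse ⟨Subtype.val, continuous_subtype_val⟩ r hr

theorem locallyContractibleSpace_corridor (hAB : Disjoint A B) :
    LocallyContractibleSpace (corridor A B) :=
  let ⟨r, hr⟩ := exists_leftInverse_corridor hAB
  have := stronglyLocallyContractibleSpace_of_locallyConvexSpace (ℝ × ℝ)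
  locallyContractibleSpace_of_leftInverse
    StronglyLocallyContractibleSpace.locallyContractible
    ⟨Subtype.val, continuous_subtype_val⟩ r hr

theorem corridor_subset_unitSquare : corridor A B ⊆ Icc 0 1 ×ˢ Icc 0 1 := by
  rintro ⟨x, y⟩ ⟨hx, hy, hyx, -⟩
  refine ⟨hx, hy, hyx.trans (abs_le.2 ⟨?_, ?_⟩)⟩ <;> linarith [hx.1, hx.2]

theorem mk_zero_mem_corridor {x : ℝ} (hx : x ∈ Icc (0 : ℝ) 1)
    (hfar : ∀ n, 3 / 4 * columnOffset n ≤ |x - column n|) : (x, 0) ∈ corridor A B :=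
  ⟨hx, le_rfl, abs_nonneg _, fun _ _ => abs_nonneg _, fun n _ => sub_nonpos.2 (hfar n)⟩

theorem zero_mem_corridor : ((0 : ℝ), (0 : ℝ)) ∈ corridor A B :=
  mk_zero_mem_corridor (by simp) fun n => le_abs.2 <| Or.inr <| by
    unfold column; linarith [columnOffset_pos n]

theorem one_zero_mem_corridor : ((1 : ℝ), (0 : ℝ)) ∈ corridor A B :=
  mk_zero_mem_corridor (by simp) fun n => le_abs.2 <| Or.inl <| by
    unfold column; linarith [columnOffset_le_quarter n]

theorem exists_computable_cast_eq_columnOffset :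
    ∃ d : ℕ → ℚ, Computable d ∧ ∀ n, (d n : ℝ) = columnOffset n :=
  ⟨fun n => (1 / 4) ^ (n + 1), computable_rat_pow (Computable.const _) Computable.succ,
    fun n => by simp [columnOffset]⟩

theorem isPi01Closed_corridor (hA : REPred (· ∈ A)) (hB : REPred (· ∈ B)) :
    IsPi01Closed (corridor A B) := by
  obtain ⟨d, hd, hd_eq⟩ := exists_computable_cast_eq_columnOffset
  have huniv : REPred (· ∈ (univ : Set Unit)) := (ComputablePred.computable_iff.2
    ⟨fun _ => true, Computable.const true, by simp⟩).to_re
  have hconst (q : ℚ) : Computable fun _ : Unit => q := Computable.const q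
  have hcolumn : Computable fun n => 1 / 2 + d n := computable_rat_add (Computable.const _) hd
  have hsides := isPi01Closed_setOf_forall_wedge huniv 0 1 (hconst (1 / 2)) (hconst (1 / 2))
  have hbottom := isPi01Closed_setOf_forall_wedge huniv (-1) 0 (hconst 0) (hconst 0)
  have htop := isPi01Closed_setOf_forall_wedge huniv 1 (-1) (hconst (1 / 2)) (hconst 0)
  have hpinch := isPi01Closed_setOf_forall_wedge hA 1 (-1) hcolumn (Computable.const 0)
  have hraise := isPi01Closed_setOf_forall_wedge hB (-1) (-1) hcolumn
    (computable_rat_mul (Computable.const (-(3 / 4))) hd)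
  convert hsides.inter (hbottom.inter (htop.inter (hpinch.inter hraise))) using 1
  ext p
  simp only [corridor, column, ← hd_eq, Set.mem_inter_iff, Set.mem_ofPred_eq, Set.mem_univ,
    forall_const]
  push_cast
  refine and_congr ?_ <| and_congr ?_ <| and_congr ?_ <|
    and_congr (forall₂_congr fun n _ => ?_) (forall₂_congr fun n _ => ?_)
  · rw [zero_mul, zero_add, one_mul, abs_le, Set.mem_Icc]
    grind
  all_goals constructor <;> intro h <;> linarith

end Corridor

/-! ### Separation by c.e. closed subsets of the corridor -/

section Separation

theorem Icc_subset_image_of_hausdorffDist_lt {X : Type*} [PseudoMetricSpace X] {S T : Set X}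
    {f : X → ℝ} {ε : ℝ} {p q : X} (hS : IsPreconnected S) (hf : LipschitzWith 1 f)
    (hfin : hausdorffEDist S T ≠ ⊤) (hε : hausdorffDist S T < ε) (hp : p ∈ T) (hq : q ∈ T) :
    Icc (f p + ε) (f q - ε) ⊆ f '' S := by
  have hnear {t : X} (ht : t ∈ T) : ∃ s ∈ S, |f s - f t| < ε := by
    obtain ⟨s, hs, hst⟩ := exists_dist_lt_of_hausdorffDist_lt' ht hε hfin
    exact ⟨s, hs, (Real.dist_eq _ _ ▸ hf.dist_le_mul s t).trans_lt (by simpa using hst)⟩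
  obtain ⟨a, ha, hap⟩ := hnear hp
  obtain ⟨b, hb, hbq⟩ := hnear hq
  refine (Icc_subset_Icc ?_ ?_).trans (hS.intermediate_value ha hb hf.continuous.continuousOn)
  · linarith [(abs_lt.1 hap).2]
  · linarith [(abs_lt.1 hbq).1]

variable {A B : Set ℕ}

theorem column_mem_image_fst_of_hausdorffDist_lt {S : Set (ℝ × ℝ)} (hS : IsConnected S)
    (hSQ : S ⊆ corridor A B) (hdist : hausdorffDist S (corridor A B) < 1 / 4) (n : ℕ) :
    column n ∈ Prod.fst '' S := by
  have hbdd : Bornology.IsBounded (corridor A B) :=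
    ((isBounded_Icc 0 1).prod (isBounded_Icc 0 1)).subset corridor_subset_unitSquare
  have hfin : hausdorffEDist S (corridor A B) ≠ ⊤ :=
    hausdorffEDist_ne_top_of_nonempty_of_bounded hS.nonempty ⟨_, zero_mem_corridor⟩
      (hbdd.subset hSQ) hbdd
  refine Icc_subset_image_of_hausdorffDist_lt hS.isPreconnected LipschitzWith.prod_fst hfin hdist
    zero_mem_corridor one_zero_mem_corridor ⟨?_, ?_⟩ <;> unfold column
  · linarith [columnOffset_pos n]
  · linarith [columnOffset_le_quarter n]

theorem mem_ball_or_mem_ball_of_mem_corridor {n : ℕ} {y : ℝ} (h : (column n, y) ∈ corridor A B) :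
    (column n, y) ∈ ball (column n, (0 : ℝ)) (3 / 8 * columnOffset n) ∨
      (column n, y) ∈ ball (column n, 7 / 10 * columnOffset n) (7 / 20 * columnOffset n) := by
  obtain ⟨-, hy, hyc, -⟩ := h
  have hpos := columnOffset_pos n
  have hle : y ≤ columnOffset n := by simpa [column, abs_of_pos hpos] using hyc
  simp only [Metric.mem_ball, Prod.dist_eq, Real.dist_eq, sub_self, abs_zero, max_lt_iff, abs_lt]
  rcases lt_or_ge y (3 / 8 * columnOffset n) with hlow | hhigh
  · exact Or.inl ⟨by positivity, by linarith, by linarith⟩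
  · exact Or.inr ⟨by positivity, by linarith, by linarith⟩

theorem disjoint_corridor_ball_bottom {n : ℕ} (hn : n ∈ B) :
    Disjoint (corridor A B) (ball (column n, (0 : ℝ)) (3 / 8 * columnOffset n)) := by
  refine Set.disjoint_left.2 ?_
  rintro ⟨x, y⟩ ⟨-, -, -, -, hraise⟩ hball
  rw [Metric.mem_ball, Prod.dist_eq, max_lt_iff] at hball
  simp only [Real.dist_eq, sub_zero] at hball
  linarith [hraise n hn, hball.1, hball.2, le_abs_self y]

theorem disjoint_corridor_ball_middle {n : ℕ} (hn : n ∈ A) :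
    Disjoint (corridor A B)
      (ball (column n, 7 / 10 * columnOffset n) (7 / 20 * columnOffset n)) := by
  refine Set.disjoint_left.2 ?_
  rintro ⟨x, y⟩ ⟨-, -, -, hpinch, -⟩ hball
  rw [Metric.mem_ball, Prod.dist_eq, max_lt_iff] at hball
  simp only [Real.dist_eq] at hball
  linarith [hpinch n hn, hball.1, hball.2, neg_abs_le (y - 7 / 10 * columnOffset n)]

theorem ballOfCode_eq_ball (c : (ℚ × ℚ) × ℚ) :
    ballOfCode c = ball ((c.1.1 : ℝ), (c.1.2 : ℝ)) c.2 :=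
  rfl

theorem IsCEClosed.rePred_inter_ball {ι : Type*} [Primcodable ι] {F : Set (ℝ × ℝ)}
    (hF : IsCEClosed F) {x y r : ι → ℚ} (hx : Computable x) (hy : Computable y)
    (hr : Computable r) : REPred fun i => (F ∩ ball ((x i : ℝ), (y i : ℝ)) (r i)).Nonempty := by
  have hcode : Computable fun i => ((x i, y i), r i) := (hx.pair hy).pair hr
  simp only [IsCEClosed, ballOfCode_eq_ball] at hF
  exact (rePred_comp hF hcode :)

theorem computablySeparable_of_hausdorffDist_lt {S : Set (ℝ × ℝ)} (hS : IsConnected S)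
    (hce : IsCEClosed S) (hSQ : S ⊆ corridor A B)
    (hdist : hausdorffDist S (corridor A B) < 1 / 4) : ComputablySeparable A B := by
  obtain ⟨d, hd, hd_eq⟩ := exists_computable_cast_eq_columnOffset
  have hcolumn : Computable fun n => 1 / 2 + d n := computable_rat_add (Computable.const _) hd
  have hmul (q : ℚ) : Computable fun n => q * d n := computable_rat_mul (Computable.const q) hd
  have hbottom : REPred fun n =>
      (S ∩ ball (column n, (0 : ℝ)) (3 / 8 * columnOffset n)).Nonempty := by
    simpa [column, ← hd_eq] using hce.rePred_inter_ball hcolumn (Computable.const 0) (hmul (3 / 8))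
  have hmiddle : REPred fun n =>
      (S ∩ ball (column n, 7 / 10 * columnOffset n) (7 / 20 * columnOffset n)).Nonempty := by
    simpa [column, ← hd_eq] using hce.rePred_inter_ball hcolumn (hmul (7 / 10)) (hmul (7 / 20))
  refine computablySeparable_of_rePred hbottom hmiddle (fun n => ?_)
    (fun n hn => ?_) fun n hn => ?_
  · obtain ⟨⟨x, y⟩, hxy, rfl : x = column n⟩ :=
      column_mem_image_fst_of_hausdorffDist_lt hS hSQ hdist n
    exact (mem_ball_or_mem_ball_of_mem_corridor (hSQ hxy)).imp (fun h => ⟨_, hxy, h⟩)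
      fun h => ⟨_, hxy, h⟩
  · exact Set.not_nonempty_iff_eq_empty.2
      ((disjoint_corridor_ball_middle hn).mono_left hSQ).inter_eq
  · exact Set.not_nonempty_iff_eq_empty.2
      ((disjoint_corridor_ball_bottom hn).mono_left hSQ).inter_eq

end Separation

theorem exists_contractible_pi01_set_without_connected_computable_subsets_general :
    ∃ Q : Set (ℝ × ℝ), Q.Nonempty ∧ IsPi01Closed Q ∧
      Q ⊆ Set.Icc (0:ℝ) 1 ×ˢ Set.Icc (0:ℝ) 1 ∧
      ContractibleSpace ↥Q ∧ LocallyContractibleSpace' ↥Q ∧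
      ∃ ε : ℝ, 0 < ε ∧ ∀ B : Set (ℝ × ℝ), B ⊆ Q → IsConnected B →
        IsCEClosed B → ε ≤ Metric.hausdorffDist B Q := by
  obtain ⟨A, B, hA, hB, hdisj, hinsep⟩ := exists_disjoint_rePred_not_computablySeparable
  refine ⟨corridor A B, ⟨_, zero_mem_corridor⟩, isPi01Closed_corridor hA hB,
    corridor_subset_unitSquare, contractibleSpace_corridor hdisj,
    locallyContractibleSpace'_iff.2 (locallyContractibleSpace_corridor hdisj),
    1 / 4, by norm_num, fun S hSQ hS hce => ?_⟩
  by_contra! hdist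
  exact hinsep (computablySeparable_of_hausdorffDist_lt hS hce hSQ hdist)

theorem exists_contractible_pi01_set_without_connected_computable_subsets :
    ∃ Q : Set (ℝ × ℝ), Q.Nonempty ∧ IsPi01Closed Q ∧
      Q ⊆ Set.Icc (0:ℝ) 1 ×ˢ Set.Icc (0:ℝ) 1 ∧
      ContractibleSpace ↥Q ∧ LocallyContractibleSpace' ↥Q ∧
      ∃ ε : ℝ, 0 < ε ∧ ∀ B : Set (ℝ × ℝ), B ⊆ Q → B.Nonempty → IsConnected B →
        IsComputableClosed B → ε ≤ Metric.hausdorffDist B Q := by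
  obtain ⟨Q, hne, hQ, hsub, hcontr, hloc, ε, hε, hfar⟩ :=
    exists_contractible_pi01_set_without_connected_computable_subsets_general
  exact ⟨Q, hne, hQ, hsub, hcontr, hloc, ε, hε, fun B hBQ _ hB hcomp => hfar B hBQ hB hcomp.2⟩
end

section
/- Let T ⊆ 2^{<ℕ} be a tree of binary strings and let D ⊆ ℝ² be a set with ψ(⟨⟩) ∈ D ⊆ Ψ(T), where ⟨⟩ is the empty string. Then D is a dendrite if and only if D is homeomorphic to Ψ(S) for some nonempty tree of binary strings S ⊆ T. -/
open Set Metric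

/-!
Every infinite binary sequence `X` traces a polygonal path, its *branch*, which `branchPt X`
parametrizes by height; the branches of `X` and `X'` meet at height `y` exactly when `X` and `X'`
agree on the bits `i` with `y < (1/2) ^ i`. Cutting the full tree at a point of a branch separates
what lies below from the rest, so a connected set containing the root contains, with each of its
points, the whole path up to the root. Conversely, a compact set with this property is a dendrite:
nearby points are joined by short arcs going up and down again, and any set with two points is
disconnected by removing a suitable point, so that it is not a circle.

A dendrite `D` through the root is therefore described by the lowest height `h X` at which it meets
each branch `X`. Rounding `h X` down to a power of two gives the corresponding heights of `Ψ(S)` for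
a subtree `S`. Stretching each branch of `Ψ(S)` between `dyadicFloor (h X)` and
`2 * dyadicFloor (h X)` moves no point across a level `(1/2) ^ n`, so it respects the
identifications between branches and yields a homeomorphism onto `D`.
-/

noncomputable section

open Filter Topology

section Topology

variable {α β : Type*} [TopologicalSpace α] [TopologicalSpace β]

theorem locallyConnectedSpace_coe_of_eventually_isPreconnected {Y : Set α}
    (h : ∀ x ∈ Y, ∀ U ∈ 𝓝 x, ∀ᶠ y in 𝓝[Y] x, ∃ C ⊆ Y ∩ U, IsPreconnected C ∧ x ∈ C ∧ y ∈ C) :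
    LocallyConnectedSpace Y := by
  refine locallyConnectedSpace_iff_connected_subsets.2 fun x V hV =>
    ⟨connectedComponentIn V x, ?_, isPreconnected_connectedComponentIn,
      connectedComponentIn_subset V x⟩
  obtain ⟨U, hU, hUV⟩ := (mem_nhds_subtype Y x V).1 hV
  filter_upwards [eventually_nhds_subtype_iff Y x _ |>.2 (h x x.2 U hU)]
    with y ⟨C, hCU, hC, hxC, hyC⟩
  have hC' : IsPreconnected (Subtype.val ⁻¹' C : Set Y) := by
    rwa [← IsInducing.subtypeVal.isPreconnected_image, Subtype.image_preimage_coe,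
      inter_eq_self_of_subset_right (hCU.trans inter_subset_left)]
  exact hC'.subset_connectedComponentIn hxC (fun z hz => hUV (hCU hz).2) hyC

theorem nonempty_homeomorph_of_same_fibers {κ : Type*} [TopologicalSpace κ] [CompactSpace κ]
    [T2Space α] [T2Space β] {u : κ → α} {v : κ → β} (hu : Continuous u) (hv : Continuous v)
    (hu_surj : Function.Surjective u) (hv_surj : Function.Surjective v)
    (h : ∀ x y, u x = u y ↔ v x = v y) : Nonempty (α ≃ₜ β) := by
  have quotient_u : IsQuotientMap u := hu.isClosedMap.isQuotientMap hu hu_surj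
  have quotient_v : IsQuotientMap v := hv.isClosedMap.isQuotientMap hv hv_surj
  exact ⟨(IsQuotientMap.homeomorph (f := ⟨u, hu⟩) quotient_u).symm.trans
    ((Homeomorph.Quotient.congrRight h).trans
      (IsQuotientMap.homeomorph (f := ⟨v, hv⟩) quotient_v))⟩

theorem IsDendrite.of_homeomorph {X : Set α} {Y : Set β} (hX : IsDendrite X) (e : Y ≃ₜ X) :
    IsDendrite Y := by
  obtain ⟨⟨hcompact, hconn⟩, hlc, hcircle⟩ := hX
  have := isCompact_iff_compactSpace.1 hcompact
  have := isConnected_iff_connectedSpace.1 hconn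
  refine ⟨⟨isCompact_iff_compactSpace.2 e.symm.compactSpace, isConnected_iff_connectedSpace.2
    (e.symm.surjective.connectedSpace e.symm.continuous)⟩, e.locallyConnectedSpace,
    fun C hC => ⟨fun k => ?_⟩⟩
  let f : C → α := fun c => e (inclusion hC c)
  have hf : IsEmbedding f :=
    IsEmbedding.subtypeVal.comp (e.isEmbedding.comp (IsEmbedding.inclusion hC))
  exact (hcircle (range f) (range_subset_iff.2 fun c => (e (inclusion hC c)).2)).false
    (hf.toHomeomorph.symm.trans k)

variable {E : Type*} [NormedAddCommGroup E] [InnerProductSpace ℝ E]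

theorem isPreconnected_compl_singleton_sphere (v : sphere (0 : E) 1) :
    IsPreconnected ({v}ᶜ : Set (sphere (0 : E) 1)) := by
  have hv : ‖(v : E)‖ = 1 := norm_eq_of_mem_sphere v
  rw [← range_stereographic_symm hv v.2]
  exact isPreconnected_range (continuous_stereoInvFun hv)

theorem isPreconnected_diff_singleton_of_homeomorph_sphere (hE : 1 < Module.rank ℝ E) {C : Set α}
    (e : C ≃ₜ sphere (0 : E) 1) (w : α) : IsPreconnected (C \ {w}) := by
  let f : sphere (0 : E) 1 → α := fun v => e.symm v
  have hf : Continuous f := continuous_subtype_val.comp e.symm.continuous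
  have hf_inj : Function.Injective f := Subtype.val_injective.comp e.symm.injective
  have hf_range : range f = C := by
    rw [show f = Subtype.val ∘ e.symm from rfl, e.symm.surjective.range_comp, Subtype.range_coe]
  by_cases hw : w ∈ C
  · obtain ⟨v, rfl⟩ := hf_range ▸ hw
    rw [← hf_range, ← image_singleton, range_sdiff_image hf_inj]
    exact (isPreconnected_compl_singleton_sphere v).image f hf.continuousOn
  · have := isPreconnected_iff_preconnectedSpace.1 (isPreconnected_sphere hE (0 : E) 1)
    rw [sdiff_singleton_eq_self hw, ← hf_range]
    exact isPreconnected_range hf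

theorem nontrivial_unitCircle : Nontrivial unitCircle := by
  refine ⟨⟨EuclideanSpace.single 0 1, by simp [unitCircle]⟩,
    ⟨EuclideanSpace.single 1 1, by simp [unitCircle]⟩, fun h => ?_⟩
  simpa using congrArg (fun x : unitCircle => (x : EuclideanSpace ℝ (Fin 2)) 0) h

theorem isEmpty_homeomorph_unitCircle_of_exists_cut {C : Set α}
    (h : C.Nontrivial → ∃ w, ¬ IsPreconnected (C \ {w})) : IsEmpty (C ≃ₜ unitCircle) := by
  refine ⟨fun e => ?_⟩
  have hrank : 1 < Module.rank ℝ (EuclideanSpace ℝ (Fin 2)) := by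
    rw [← Module.finrank_eq_rank]; simp
  have := nontrivial_unitCircle
  have hC : C.Nontrivial := nontrivial_coe_sort.1 (e.symm.injective.nontrivial)
  obtain ⟨w, hw⟩ := h hC
  exact hw (isPreconnected_diff_singleton_of_homeomorph_sphere hrank e w)

end Topology

theorem tsum_mul_pow_ne_zero {c : ℕ → ℝ} {r : ℝ} (hr : 0 < r) (hr' : r < 1 / 2) {k : ℕ}
    (hlt : ∀ n < k, c n = 0) (hle : ∀ n, |c n| ≤ |c k|) (hk : c k ≠ 0) :
    ∑' n, c n * r ^ n ≠ 0 := by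
  have hbound : ∀ n, ‖c n * r ^ n‖ ≤ |c k| * r ^ n := fun n => by
    rw [norm_mul, norm_pow, Real.norm_eq_abs, Real.norm_of_nonneg hr.le]
    exact mul_le_mul_of_nonneg_right (hle n) (pow_nonneg hr.le n)
  have hgeom : HasSum (fun n => |c k| * r ^ n) (|c k| * (1 - r)⁻¹) :=
    (hasSum_geometric_of_lt_one hr.le (by linarith)).mul_left _
  have htail : ‖∑' n, c (n + (k + 1)) * r ^ (n + (k + 1))‖ ≤ |c k| * (1 - r)⁻¹ * r ^ (k + 1) :=
    tsum_of_norm_bounded (hgeom.mul_right _) fun n => by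
      simpa only [pow_add, mul_assoc] using hbound (n + (k + 1))
  intro hsum
  have hsplit := (Summable.of_norm_bounded hgeom.summable hbound).sum_add_tsum_nat_add (k + 1)
  rw [hsum, Finset.sum_range_succ, Finset.sum_eq_zero fun n hn => by
    rw [hlt n (Finset.mem_range.1 hn), zero_mul], zero_add] at hsplit
  rw [eq_neg_of_add_eq_zero_right hsplit, norm_neg, norm_mul, norm_pow, Real.norm_eq_abs,
    Real.norm_of_nonneg hr.le, pow_succ', mul_assoc, ← mul_assoc _ r] at htail
  have hratio : (1 - r)⁻¹ * r < 1 := by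
    rw [inv_mul_lt_one₀ (by linarith)]; linarith
  have hpos : 0 < |c k| * r ^ k := mul_pos (abs_pos.2 hk) (pow_pos hr k)
  nlinarith

section DyadicLevels

theorem half_pow_pos (n : ℕ) : (0 : ℝ) < (1 / 2) ^ n := by positivity

theorem half_pow_anti {m n : ℕ} (h : m ≤ n) : (1 / 2 : ℝ) ^ n ≤ (1 / 2) ^ m :=
  pow_le_pow_of_le_one (by norm_num) (by norm_num) h

theorem half_pow_lt_half_pow_iff {m n : ℕ} : (1 / 2 : ℝ) ^ m < (1 / 2) ^ n ↔ n < m :=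
  pow_lt_pow_iff_right_of_lt_one₀ (by norm_num) (by norm_num)

theorem tendsto_half_pow : Tendsto (fun n : ℕ => (1 / 2 : ℝ) ^ n) atTop (𝓝 0) :=
  tendsto_pow_atTop_nhds_zero_of_lt_one (by norm_num) (by norm_num)

theorem two_pow_succ_mul_half_pow (n : ℕ) : (2 : ℝ) ^ (n + 1) * (1 / 2) ^ n = 2 := by
  rw [pow_succ', mul_assoc, ← mul_pow]; norm_num

theorem two_pow_mul_half_pow (n : ℕ) : (2 : ℝ) ^ n * (1 / 2) ^ n = 1 := by
  rw [← mul_pow]; norm_num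

theorem finite_setOf_lt_half_pow {z : ℝ} (hz : 0 < z) : {i : ℕ | z < (1 / 2) ^ i}.Finite := by
  have h := tendsto_half_pow.eventually_lt_const hz
  rw [← Nat.cofinite_eq_atTop, eventually_cofinite] at h
  exact h.subset fun i hi => not_lt.2 (le_of_lt hi)

end DyadicLevels

section Branches

/-- The affine parameter from `0` at height `(1/2) ^ n` to `1` at height `(1/2) ^ (n + 1)`,
clamped to `[0, 1]`: the fraction of the `n`-th segment of a branch that lies above height `y`. -/
def segmentParam (n : ℕ) (y : ℝ) : ℝ := max 0 (min 1 (2 - 2 ^ (n + 1) * y))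

theorem segmentParam_nonneg (n : ℕ) (y : ℝ) : 0 ≤ segmentParam n y := le_max_left _ _

theorem segmentParam_le_one (n : ℕ) (y : ℝ) : segmentParam n y ≤ 1 :=
  max_le zero_le_one (min_le_left _ _)

theorem continuous_segmentParam (n : ℕ) : Continuous (segmentParam n) := by
  unfold segmentParam; fun_prop

theorem two_pow_succ_mul_le_two_iff {n : ℕ} {y : ℝ} :
    2 ^ (n + 1) * y ≤ 2 ↔ y ≤ (1 / 2) ^ n := by
  have h := mul_le_mul_iff_right₀ (pow_pos two_pos (n + 1)) (b := y) (c := (1 / 2) ^ n)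
  rwa [two_pow_succ_mul_half_pow] at h

theorem two_le_two_pow_succ_mul_iff {n : ℕ} {y : ℝ} :
    2 ≤ 2 ^ (n + 1) * y ↔ (1 / 2) ^ n ≤ y := by
  have h := mul_le_mul_iff_right₀ (pow_pos two_pos (n + 1)) (b := (1 / 2) ^ n) (c := y)
  rwa [two_pow_succ_mul_half_pow] at h

theorem segmentParam_eq_zero_iff {n : ℕ} {y : ℝ} : segmentParam n y = 0 ↔ (1 / 2) ^ n ≤ y := by
  rw [segmentParam, max_eq_left_iff, min_le_iff, ← two_le_two_pow_succ_mul_iff, sub_nonpos]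
  exact or_iff_right (by norm_num)

theorem segmentParam_eq {n : ℕ} {y : ℝ} (h : y ≤ (1 / 2) ^ n) (h' : (1 / 2) ^ (n + 1) ≤ y) :
    segmentParam n y = 2 - 2 ^ (n + 1) * y := by
  have : 1 ≤ 2 ^ (n + 1) * y := by
    rw [← two_pow_mul_half_pow (n + 1)]; gcongr
  rw [segmentParam, min_eq_right (by linarith),
    max_eq_right (sub_nonneg.2 (two_pow_succ_mul_le_two_iff.2 h))]

theorem segmentParam_eq_one {n : ℕ} {y : ℝ} (h : y ≤ (1 / 2) ^ (n + 1)) : segmentParam n y = 1 := by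
  have : 2 ^ (n + 1) * y ≤ 1 := by
    rw [← two_pow_mul_half_pow (n + 1)]; gcongr
  rw [segmentParam, min_eq_left (by linarith), max_eq_right zero_le_one]

theorem segmentParam_anti {m n : ℕ} (hmn : m ≤ n) {y : ℝ} (hy : 0 ≤ y) :
    segmentParam n y ≤ segmentParam m y := by
  unfold segmentParam
  gcongr
  norm_num

/-- The horizontal direction taken at a bit: left for `false`, right for `true`. -/
def bitSign (b : Bool) : ℝ := if b then 1 else -1

theorem abs_bitSign (b : Bool) : |bitSign b| = 1 := by cases b <;> simp [bitSign]

theorem abs_bitSign_sub_le (b b' : Bool) : |bitSign b - bitSign b'| ≤ 2 :=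
  (abs_sub _ _).trans_eq (by rw [abs_bitSign, abs_bitSign]; norm_num)

theorem abs_bitSign_sub_of_ne {b b' : Bool} (h : b ≠ b') : |bitSign b - bitSign b'| = 2 := by
  cases b <;> cases b' <;> simp [bitSign] at h ⊢ <;> norm_num

/-- The abscissa at height `y` of the infinite polygonal path through the points `ψ(σ)`,
`σ` ranging over the initial segments of `X`. -/
def branchX (X : ℕ → Bool) (y : ℝ) : ℝ :=
  1 / 2 + ∑' n, bitSign (X n) * (1 / 3) ^ (n + 1) * segmentParam n y

/-- The point at height `y` of the infinite polygonal path through the points `ψ(σ)`,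
`σ` ranging over the initial segments of `X`. -/
def branchPt (X : ℕ → Bool) (y : ℝ) : ℝ × ℝ := (branchX X y, y)

/-- The parametrization of the embedded full binary tree by branch and height. -/
def branchMap (q : (ℕ → Bool) × unitInterval) : ℝ × ℝ := branchPt q.1 q.2

theorem summable_one_third_pow_succ : Summable fun n : ℕ => (1 / 3 : ℝ) ^ (n + 1) :=
  (summable_nat_add_iff 1).2 (summable_geometric_of_lt_one (by norm_num) (by norm_num))

theorem norm_branchX_term_le (X : ℕ → Bool) (y : ℝ) (n : ℕ) :
    ‖bitSign (X n) * (1 / 3) ^ (n + 1) * segmentParam n y‖ ≤ (1 / 3 : ℝ) ^ (n + 1) := by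
  rw [norm_mul, norm_mul, Real.norm_eq_abs (bitSign _), abs_bitSign, one_mul,
    Real.norm_of_nonneg (by positivity), Real.norm_of_nonneg (segmentParam_nonneg n y)]
  exact mul_le_of_le_one_right (by positivity) (segmentParam_le_one n y)

theorem summable_branchX_term (X : ℕ → Bool) (y : ℝ) :
    Summable fun n => bitSign (X n) * (1 / 3) ^ (n + 1) * segmentParam n y :=
  summable_one_third_pow_succ.of_norm_bounded (norm_branchX_term_le X y)

theorem continuous_uncurry_branchPt : Continuous fun q : (ℕ → Bool) × ℝ => branchPt q.1 q.2 := by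
  have hterm (n : ℕ) : Continuous fun q : (ℕ → Bool) × ℝ =>
      bitSign (q.1 n) * (1 / 3) ^ (n + 1) * segmentParam n q.2 :=
    (((continuous_of_discreteTopology (f := bitSign)).comp
      ((continuous_apply n).comp continuous_fst)).mul_const _).mul
        ((continuous_segmentParam n).comp continuous_snd)
  exact (continuous_const.add (continuous_tsum hterm summable_one_third_pow_succ
    fun n q => norm_branchX_term_le q.1 q.2 n)).prodMk continuous_snd

theorem continuous_branchPt (X : ℕ → Bool) : Continuous (branchPt X) :=
  continuous_uncurry_branchPt.comp (by fun_prop : Continuous fun y : ℝ => (X, y))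

theorem continuous_branchMap : Continuous branchMap :=
  continuous_uncurry_branchPt.comp
    (by fun_prop : Continuous fun q : (ℕ → Bool) × unitInterval => (q.1, (q.2 : ℝ)))

theorem isClosedMap_branchMap : IsClosedMap branchMap := continuous_branchMap.isClosedMap

/-- `X` and `X'` agree on all bits that shape a branch above height `y`. -/
def AgreeAbove (y : ℝ) (X X' : ℕ → Bool) : Prop := ∀ i, y < (1 / 2) ^ i → X i = X' i

theorem AgreeAbove.refl (y : ℝ) (X : ℕ → Bool) : AgreeAbove y X X := fun _ _ => rfl

theorem AgreeAbove.symm {y : ℝ} {X X' : ℕ → Bool} (h : AgreeAbove y X X') : AgreeAbove y X' X :=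
  fun i hi => (h i hi).symm

theorem AgreeAbove.trans {y : ℝ} {X X' X'' : ℕ → Bool} (h : AgreeAbove y X X')
    (h' : AgreeAbove y X' X'') : AgreeAbove y X X'' :=
  fun i hi => (h i hi).trans (h' i hi)

theorem AgreeAbove.mono {y z : ℝ} {X X' : ℕ → Bool} (h : AgreeAbove y X X') (hyz : y ≤ z) :
    AgreeAbove z X X' :=
  fun i hi => h i (hyz.trans_lt hi)

theorem isClopen_setOf_agreeAbove {z : ℝ} (hz : 0 < z) (X : ℕ → Bool) :
    IsClopen {X' | AgreeAbove z X X'} := by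
  have : {X' | AgreeAbove z X X'} = ⋂ i ∈ {i : ℕ | z < (1 / 2) ^ i}, {X' | X i = X' i} := by
    ext X'; simp [AgreeAbove]
  rw [this]
  exact (finite_setOf_lt_half_pow hz).isClopen_biInter fun i _ =>
    (isClopen_discrete {b | X i = b}).preimage (continuous_apply i)

theorem AgreeAbove.branchPt_eq {X X' : ℕ → Bool} {y : ℝ} (h : AgreeAbove y X X') :
    branchPt X y = branchPt X' y := by
  have hterm (n : ℕ) : bitSign (X n) * (1 / 3) ^ (n + 1) * segmentParam n y =
      bitSign (X' n) * (1 / 3) ^ (n + 1) * segmentParam n y := by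
    rcases lt_or_ge y ((1 / 2) ^ n) with hn | hn
    · rw [h n hn]
    · rw [segmentParam_eq_zero_iff.2 hn, mul_zero, mul_zero]
  rw [branchPt, branchPt, branchX, branchX, tsum_congr hterm]

-- At the first bit where `X` and `X'` differ, the difference of the abscissae has a nonzero
-- coefficient which dominates all later ones.
theorem agreeAbove_of_branchX_eq {X X' : ℕ → Bool} {y : ℝ} (hy : 0 ≤ y)
    (h : branchX X y = branchX X' y) : AgreeAbove y X X' := by
  by_contra hne
  obtain ⟨j, hj, hj_ne⟩ : ∃ j, y < (1 / 2) ^ j ∧ X j ≠ X' j := by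
    simpa only [AgreeAbove, not_forall, exists_prop] using hne
  have hXX' : X ≠ X' := fun h => hj_ne (congrFun h j)
  set k := PiNat.firstDiff X X'
  let c : ℕ → ℝ := fun n => (bitSign (X n) - bitSign (X' n)) * segmentParam n y
  have hkj : k ≤ j := not_lt.1 fun hjk => hj_ne (PiNat.apply_eq_of_lt_firstDiff hjk)
  have habs_k : |c k| = 2 * segmentParam k y := by
    rw [abs_mul, abs_bitSign_sub_of_ne (PiNat.apply_firstDiff_ne hXX'),
      abs_of_nonneg (segmentParam_nonneg k y)]
  have hck : c k ≠ 0 := by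
    have : segmentParam k y ≠ 0 :=
      mt segmentParam_eq_zero_iff.1 (hj.trans_le (half_pow_anti hkj)).not_ge
    rw [← abs_pos, habs_k]
    positivity [segmentParam_nonneg k y]
  have hlt : ∀ n < k, c n = 0 := fun n hn => by
    rw [show c n = (bitSign (X n) - bitSign (X' n)) * segmentParam n y from rfl,
      PiNat.apply_eq_of_lt_firstDiff hn, sub_self, zero_mul]
  have hle (n : ℕ) : |c n| ≤ |c k| := by
    rcases lt_or_ge n k with hn | hn
    · rw [hlt n hn, abs_zero]; exact abs_nonneg _
    · rw [habs_k, abs_mul, abs_of_nonneg (segmentParam_nonneg n y)]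
      exact mul_le_mul (abs_bitSign_sub_le _ _) (segmentParam_anti hn hy)
        (segmentParam_nonneg n y) zero_le_two
  refine tsum_mul_pow_ne_zero (r := 1 / 3) (by norm_num) (by norm_num) hlt hle hck ?_
  have hdiff := sub_eq_zero.2 (add_left_cancel h)
  rw [← (summable_branchX_term X y).tsum_sub (summable_branchX_term X' y)] at hdiff
  have hscale (n : ℕ) : bitSign (X n) * (1 / 3) ^ (n + 1) * segmentParam n y -
      bitSign (X' n) * (1 / 3) ^ (n + 1) * segmentParam n y = 1 / 3 * (c n * (1 / 3) ^ n) := by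
    ring
  rw [tsum_congr hscale, tsum_mul_left] at hdiff
  exact (mul_eq_zero.1 hdiff).resolve_left (by norm_num)

theorem branchPt_eq_iff {X X' : ℕ → Bool} {y y' : ℝ} (hy : 0 ≤ y) :
    branchPt X y = branchPt X' y' ↔ y = y' ∧ AgreeAbove y X X' := by
  constructor
  · intro h
    obtain rfl : y = y' := congrArg Prod.snd h
    exact ⟨rfl, agreeAbove_of_branchX_eq hy (congrArg Prod.fst h)⟩
  · rintro ⟨rfl, h⟩
    exact h.branchPt_eq

end Branches

section InitialSegments

variable {X X' : ℕ → Bool} {m n : ℕ}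

/-- The binary string of the first `n` bits of `X`. -/
def initSeg (X : ℕ → Bool) (n : ℕ) : List Bool := (List.range n).map X

theorem initSeg_zero (X : ℕ → Bool) : initSeg X 0 = [] := rfl

theorem initSeg_succ (X : ℕ → Bool) (n : ℕ) : initSeg X (n + 1) = initSeg X n ++ [X n] := by
  simp [initSeg, List.range_succ]

theorem length_initSeg (X : ℕ → Bool) (n : ℕ) : (initSeg X n).length = n := by simp [initSeg]

theorem take_initSeg (X : ℕ → Bool) (h : m ≤ n) : (initSeg X n).take m = initSeg X m := by
  rw [initSeg, ← List.map_take, List.take_range, min_eq_left h, initSeg]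

theorem initSeg_prefix (X : ℕ → Bool) (h : m ≤ n) : initSeg X m <+: initSeg X n :=
  take_initSeg X h ▸ List.take_prefix m _

theorem eq_initSeg_of_prefix {σ : List Bool} (h : σ <+: initSeg X n) :
    σ = initSeg X σ.length := by
  have hle : σ.length ≤ n := length_initSeg X n ▸ h.length_le
  rw [← take_initSeg X hle, ← List.prefix_iff_eq_take]
  exact h

theorem initSeg_eq_initSeg_iff : initSeg X n = initSeg X' n ↔ ∀ i < n, X i = X' i := by
  simp [initSeg, List.map_inj_left]

theorem exists_initSeg_eq (σ : List Bool) : ∃ X, initSeg X σ.length = σ :=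
  ⟨fun i => σ.getD i false, List.ext_getElem (length_initSeg _ _) fun i _ hi => by
    simp [initSeg, hi]⟩

theorem isLocallyConstant_initSeg (n : ℕ) : IsLocallyConstant fun X => initSeg X n := by
  refine (IsLocallyConstant.iff_eventually_eq _).2 fun X => ?_
  filter_upwards [(PiNat.isOpen_cylinder (fun _ => Bool) X n).mem_nhds
    (PiNat.self_mem_cylinder X n)] with X' hX'
  exact initSeg_eq_initSeg_iff.2 hX'

theorem AgreeAbove.initSeg_eq {y : ℝ} (h : AgreeAbove y X X') (hy : y < (1 / 2) ^ n) :
    initSeg X (n + 1) = initSeg X' (n + 1) :=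
  initSeg_eq_initSeg_iff.2 fun i hi => h i (hy.trans_le (half_pow_anti (Nat.lt_succ_iff.1 hi)))

theorem agreeAbove_half_pow_of_initSeg_eq (h : initSeg X n = initSeg X' n) :
    AgreeAbove ((1 / 2) ^ n) X X' :=
  fun i hi => initSeg_eq_initSeg_iff.1 h i (half_pow_lt_half_pow_iff.1 hi)

theorem psiPt_initSeg (X : ℕ → Bool) (n : ℕ) : psiPt (initSeg X n) =
    (1 / 2 + ∑ i ∈ Finset.range n, bitSign (X i) * (1 / 3) ^ (i + 1), (1 / 2) ^ n) := by
  have hzpow (a : ℝ) (k : ℕ) : a ^ (-(k : ℤ)) = (1 / a) ^ k := by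
    rw [zpow_neg, zpow_natCast, one_div, inv_pow]
  have hbit : ∀ i ∈ Finset.range n, (if (initSeg X n).getD i false then
      (3 : ℝ) ^ (-((i : ℤ) + 1)) else 0) = if X i then (1 / 3) ^ (i + 1) else 0 := fun i hi => by
    have hi' : i < n := Finset.mem_range.1 hi
    simp only [initSeg, List.getD_eq_getElem?_getD, List.getElem?_map, List.getElem?_range hi',
      Option.map_some, Option.getD_some, ← Nat.cast_succ, hzpow]
  have hsum : (1 / 3 : ℝ) ^ n / 2 + 2 * ∑ i ∈ Finset.range n, (if X i then (1 / 3) ^ (i + 1) else 0)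
      = 1 / 2 + ∑ i ∈ Finset.range n, bitSign (X i) * (1 / 3) ^ (i + 1) := by
    clear hbit
    induction n with
    | zero => simp
    | succ n ih =>
      rw [Finset.sum_range_succ, Finset.sum_range_succ, ← add_assoc, ← ih]
      cases X n <;> simp [bitSign] <;> ring
  rw [psiPt, length_initSeg, Finset.sum_congr rfl hbit, hzpow, hzpow, hsum]

theorem branchX_eq_of_mem_Icc (X : ℕ → Bool) {y : ℝ}
    (hy : y ∈ Icc ((1 / 2) ^ (n + 1)) ((1 / 2) ^ n)) :
    branchX X y = 1 / 2 + ∑ i ∈ Finset.range n, bitSign (X i) * (1 / 3) ^ (i + 1) +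
      bitSign (X n) * (1 / 3) ^ (n + 1) * (2 - 2 ^ (n + 1) * y) := by
  have hzero : ∀ i ∉ Finset.range (n + 1),
      bitSign (X i) * (1 / 3) ^ (i + 1) * segmentParam i y = 0 := fun i hi => by
    have hni : n + 1 ≤ i := by simpa using hi
    rw [segmentParam_eq_zero_iff.2 ((half_pow_anti hni).trans hy.1), mul_zero]
  have hone : ∀ i ∈ Finset.range n, bitSign (X i) * (1 / 3) ^ (i + 1) * segmentParam i y =
      bitSign (X i) * (1 / 3) ^ (i + 1) := fun i hi => by
    rw [segmentParam_eq_one (hy.2.trans (half_pow_anti (Finset.mem_range.1 hi))), mul_one]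
  rw [branchX, tsum_eq_sum hzero, Finset.sum_range_succ, Finset.sum_congr rfl hone,
    segmentParam_eq hy.2 hy.1, add_assoc]

theorem branchPt_eq_lineMap (X : ℕ → Bool) {y : ℝ}
    (hy : y ∈ Icc ((1 / 2) ^ (n + 1)) ((1 / 2) ^ n)) :
    branchPt X y = AffineMap.lineMap (psiPt (initSeg X n)) (psiPt (initSeg X (n + 1)))
      (2 - 2 ^ (n + 1) * y) := by
  rw [psiPt_initSeg, psiPt_initSeg, Finset.sum_range_succ, AffineMap.lineMap_apply_module']
  refine Prod.ext ?_ ?_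
  · simp only [branchPt, branchX_eq_of_mem_Icc X hy, Prod.fst_add, Prod.smul_fst, Prod.fst_sub,
      smul_eq_mul]
    ring
  · simp only [branchPt, Prod.snd_add, Prod.smul_snd, Prod.snd_sub, smul_eq_mul]
    linear_combination -y * two_pow_mul_half_pow n

theorem branchPt_half_pow (X : ℕ → Bool) (n : ℕ) :
    branchPt X ((1 / 2) ^ n) = psiPt (initSeg X n) := by
  rw [branchPt_eq_lineMap X ⟨half_pow_anti n.le_succ, le_rfl⟩, two_pow_succ_mul_half_pow, sub_self,
    AffineMap.lineMap_apply_zero]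

theorem branchPt_one (X : ℕ → Bool) : branchPt X 1 = psiPt [] := by
  simpa only [pow_zero, initSeg_zero] using branchPt_half_pow X 0

theorem segment_psiPt_initSeg (X : ℕ → Bool) (n : ℕ) :
    segment ℝ (psiPt (initSeg X n)) (psiPt (initSeg X (n + 1))) =
      branchPt X '' Icc ((1 / 2) ^ (n + 1)) ((1 / 2) ^ n) := by
  have hparam : (fun y : ℝ => 2 - 2 ^ (n + 1) * y) '' Icc ((1 / 2) ^ (n + 1)) ((1 / 2) ^ n) =
      Icc 0 1 := by
    rw [← image_image (fun t => 2 - t) fun y => (2 : ℝ) ^ (n + 1) * y,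
      image_mul_left_Icc (by positivity) (half_pow_anti n.le_succ), two_pow_succ_mul_half_pow,
      two_pow_mul_half_pow, image_const_sub_Icc]
    norm_num
  rw [segment_eq_image_lineMap, ← hparam, image_image]
  exact image_congr fun y hy => (branchPt_eq_lineMap X hy).symm

end InitialSegments

section PsiSet

variable {T : Set (List Bool)} {X : ℕ → Bool} {n : ℕ}

theorem IsTreeOfStrings.nil_mem (hT : IsTreeOfStrings T) (hne : T.Nonempty) : [] ∈ T :=
  hne.elim fun σ hσ => hT σ hσ [] List.nil_prefix

/-- The pairs of a branch `X` and a height `y` such that the part of `X` above height `y` is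
drawn along strings of `T`. -/
def treeCoords (T : Set (List Bool)) : Set ((ℕ → Bool) × unitInterval) :=
  {q | ∀ n, (q.2 : ℝ) < (1 / 2) ^ n → initSeg q.1 (n + 1) ∈ T}

theorem isClosed_treeCoords (T : Set (List Bool)) : IsClosed (treeCoords T) := by
  have heq : treeCoords T =
      ⋂ n : ℕ, {q | (1 / 2 : ℝ) ^ n ≤ q.2} ∪ {q | initSeg q.1 (n + 1) ∈ T} := by
    ext q
    simp only [treeCoords, mem_iInter, mem_union, mem_ofPred_eq, ← not_lt, imp_iff_not_or]
  rw [heq]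
  refine isClosed_iInter fun n => (isClosed_le continuous_const (by fun_prop)).union ?_
  have hclosed : IsClosed {X | initSeg X (n + 1) ∈ T} := ⟨isLocallyConstant_initSeg (n + 1) Tᶜ⟩
  exact hclosed.preimage continuous_fst

theorem mem_treeCoords_of_half_pow_le (hT : IsTreeOfStrings T) (hX : initSeg X n ∈ T)
    {y : unitInterval} (hy : (1 / 2) ^ n ≤ (y : ℝ)) : (X, y) ∈ treeCoords T := fun _ hm =>
  hT _ hX _ (initSeg_prefix X (half_pow_lt_half_pow_iff.1 (hy.trans_lt hm)))

theorem half_pow_mem_unitInterval (n : ℕ) : (1 / 2 : ℝ) ^ n ∈ unitInterval :=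
  ⟨(half_pow_pos n).le, pow_le_one₀ (by norm_num) (by norm_num)⟩

theorem segment_dropLast_psiPt_initSeg (X : ℕ → Bool) (n : ℕ) :
    segment ℝ (psiPt (initSeg X (n + 1)).dropLast) (psiPt (initSeg X (n + 1))) =
      branchPt X '' Icc ((1 / 2) ^ (n + 1)) ((1 / 2) ^ n) := by
  rw [← segment_psiPt_initSeg, initSeg_succ, List.dropLast_concat]

theorem psiSet_subset_image_treeCoords (hT : IsTreeOfStrings T) :
    PsiSet T ⊆ branchMap '' treeCoords T := by
  refine closure_minimal (union_subset ?_ ?_) (isClosedMap_branchMap _ (isClosed_treeCoords T))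
  · rintro _ ⟨σ, hσ, rfl⟩
    obtain ⟨X, hX⟩ := exists_initSeg_eq σ
    refine ⟨(X, ⟨_, half_pow_mem_unitInterval σ.length⟩),
      mem_treeCoords_of_half_pow_le hT (hX.symm ▸ hσ) le_rfl, ?_⟩
    rw [branchMap, branchPt_half_pow, hX]
  · refine iUnion₂_subset fun σ hσ => iUnion_subset fun hσ_ne => ?_
    obtain ⟨X, hX⟩ := exists_initSeg_eq σ
    obtain ⟨n, hn⟩ := Nat.exists_eq_succ_of_ne_zero (List.length_pos_iff.2 hσ_ne).ne'
    rw [hn] at hX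
    subst hX
    rw [segment_dropLast_psiPt_initSeg]
    rintro _ ⟨y, ⟨hy, hy'⟩, rfl⟩
    exact ⟨(X, ⟨y, (half_pow_pos _).le.trans hy, hy'.trans (half_pow_mem_unitInterval n).2⟩),
      mem_treeCoords_of_half_pow_le hT hσ hy, rfl⟩

theorem branchPt_mem_psiSet_of_pos (hnil : [] ∈ T) {y : unitInterval} (hy : 0 < (y : ℝ))
    (h : (X, y) ∈ treeCoords T) : branchPt X y ∈ PsiSet T := by
  refine subset_closure ?_
  obtain ⟨n, hn, hn'⟩ :=
    exists_nat_pow_near_of_lt_one hy y.2.2 (by norm_num : (0 : ℝ) < 1 / 2) (by norm_num)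
  obtain heq | hlt := hn'.eq_or_lt
  · refine Or.inl ⟨initSeg X n, ?_, by rw [heq, branchPt_half_pow]⟩
    cases n with
    | zero => exact hnil
    | succ m => exact h m (heq ▸ half_pow_lt_half_pow_iff.2 m.lt_succ_self)
  · refine Or.inr (mem_biUnion (h n hlt) (mem_iUnion.2 ⟨by simp [initSeg_succ], ?_⟩))
    rw [segment_dropLast_psiPt_initSeg]
    exact mem_image_of_mem _ ⟨hn.le, hlt.le⟩

theorem branchPt_mem_psiSet (hnil : [] ∈ T) {y : unitInterval} (h : (X, y) ∈ treeCoords T) :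
    branchPt X y ∈ PsiSet T := by
  obtain hy | hy := y.2.1.eq_or_lt
  · have hlim : Tendsto (fun n : ℕ => branchPt X ((1 / 2) ^ n)) atTop (𝓝 (branchPt X y)) :=
      hy ▸ ((continuous_branchPt X).tendsto 0).comp tendsto_half_pow
    refine isClosed_closure.mem_of_tendsto hlim (Eventually.of_forall fun n => ?_)
    exact branchPt_mem_psiSet_of_pos hnil (y := ⟨_, half_pow_mem_unitInterval n⟩)
      (half_pow_pos n) fun m _ => h m (hy ▸ half_pow_pos m)
  · exact branchPt_mem_psiSet_of_pos hnil hy h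

theorem psiSet_subset_range_branchMap (hT : IsTreeOfStrings T) : PsiSet T ⊆ range branchMap :=
  (psiSet_subset_image_treeCoords hT).trans (image_subset_range _ _)

theorem branchPt_mem_psiSet_iff (hT : IsTreeOfStrings T) (hne : T.Nonempty) {y : unitInterval} :
    branchPt X y ∈ PsiSet T ↔ ∀ n, (y : ℝ) < (1 / 2) ^ n → initSeg X (n + 1) ∈ T := by
  refine ⟨fun h n hn => ?_, branchPt_mem_psiSet (hT.nil_mem hne)⟩
  obtain ⟨⟨X', y'⟩, hmem, heq⟩ := psiSet_subset_image_treeCoords hT h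
  obtain ⟨hy, hX⟩ := (branchPt_eq_iff y'.2.1).1 heq
  rw [← hX.initSeg_eq (hy ▸ hn)]
  exact hmem n (hy ▸ hn)

theorem isCompact_psiSet (hT : IsTreeOfStrings T) : IsCompact (PsiSet T) :=
  (isCompact_range continuous_branchMap).of_isClosed_subset isClosed_closure
    (psiSet_subset_range_branchMap hT)

end PsiSet

section RootClosed

variable {X X' : ℕ → Bool} {D Y : Set (ℝ × ℝ)}

-- The points of the full tree lying below `branchPt X z` and the remaining ones have closed
-- hulls that meet only in `branchPt X z`.
theorem branchPt_mem_of_isPreconnected (hD : IsPreconnected D) (hsub : D ⊆ range branchMap)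
    {y y' z : unitInterval} (hz : 0 < z) (hyz : y ≤ z) (hy : branchPt X y ∈ D)
    (hy' : branchPt X' y' ∈ D) (hor : z ≤ y' ∨ ¬ AgreeAbove z X X') : branchPt X z ∈ D := by
  have hclopen : IsClopen {q : (ℕ → Bool) × unitInterval | AgreeAbove z X q.1} :=
    (isClopen_setOf_agreeAbove hz X).preimage continuous_fst
  let below : Set ((ℕ → Bool) × unitInterval) := {q | q.2 ≤ z} ∩ {q | AgreeAbove z X q.1}
  let above : Set ((ℕ → Bool) × unitInterval) := {q | z ≤ q.2} ∪ {q | AgreeAbove z X q.1}ᶜ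
  have hbelow : IsClosed below := (isClosed_le continuous_snd continuous_const).inter hclopen.1
  have habove : IsClosed above :=
    (isClosed_le continuous_const continuous_snd).union hclopen.compl.1
  have hcover : below ∪ above = univ := eq_univ_of_forall fun q => by
    by_cases hq : AgreeAbove z X q.1
    · exact (le_total q.2 z).imp (⟨·, hq⟩) Or.inl
    · exact Or.inr (Or.inr hq)
  obtain ⟨_, hmem, ⟨⟨X₁, y₁⟩, ⟨hle, hX₁⟩, rfl⟩, ⟨⟨X₂, y₂⟩, h₂, heq⟩⟩ :=
    isPreconnected_closed_iff.1 hD _ _ (isClosedMap_branchMap _ hbelow)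
      (isClosedMap_branchMap _ habove)
      (by rwa [← image_union, hcover, image_univ])
      ⟨_, hy, (X, y), ⟨hyz, AgreeAbove.refl _ X⟩, rfl⟩ ⟨_, hy', (X', y'), hor, rfl⟩
  obtain ⟨hy_eq, hagree⟩ := (branchPt_eq_iff y₂.2.1).1 heq
  obtain rfl : y₂ = y₁ := Subtype.ext hy_eq
  have hX₂ : AgreeAbove z X X₂ := hX₁.trans (hagree.mono hle).symm
  obtain rfl : y₂ = z := le_antisymm hle (h₂.resolve_right (not_not_intro hX₂))
  rw [hX₁.branchPt_eq]
  exact hmem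

/-- A set is root-closed if, with each point of a branch, it contains the part of the branch from
that point up to the root `ψ(⟨⟩)`. -/
def IsRootClosed (Y : Set (ℝ × ℝ)) : Prop :=
  ∀ ⦃X : ℕ → Bool⦄ ⦃y z : unitInterval⦄, y ≤ z → branchPt X y ∈ Y → branchPt X z ∈ Y

theorem isRootClosed_of_isPreconnected (hD : IsPreconnected D) (hsub : D ⊆ range branchMap)
    (hroot : psiPt [] ∈ D) : IsRootClosed D := fun X y z hyz hy => by
  obtain rfl | hlt := hyz.eq_or_lt
  · exact hy
  · exact branchPt_mem_of_isPreconnected hD hsub (bot_le.trans_lt hlt) hyz hy (X' := X) (y' := 1)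
      (by simpa [branchPt_one] using hroot) (Or.inl z.2.2)

theorem isRootClosed_psiSet {T : Set (List Bool)} (hT : IsTreeOfStrings T) (hne : T.Nonempty) :
    IsRootClosed (PsiSet T) := fun X y z hyz hy => by
  rw [branchPt_mem_psiSet_iff hT hne] at hy ⊢
  exact fun n hn => hy n (lt_of_le_of_lt hyz hn)

theorem exists_not_isPreconnected_sdiff_singleton {C : Set (ℝ × ℝ)} (hC : C ⊆ range branchMap)
    (hnontrivial : C.Nontrivial) : ∃ w, ¬ IsPreconnected (C \ {w}) := by
  obtain ⟨p, hp, p', hp', hne⟩ := hnontrivial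
  wlog hle : p.2 ≤ p'.2 generalizing p p'
  · exact this p' hp' p hp hne.symm (le_of_not_ge hle)
  obtain ⟨⟨⟨X, y⟩, rfl⟩, ⟨⟨X', y'⟩, rfl⟩⟩ := hC hp, hC hp'
  obtain ⟨z, hyz, hzy', hor⟩ : ∃ z, y < z ∧ z ≠ y' ∧ (z ≤ y' ∨ ¬ AgreeAbove z X X') := by
    obtain heq | hlt := (show y ≤ y' from hle).eq_or_lt
    · subst heq
      obtain ⟨i, hi, hXi⟩ : ∃ i, (y : ℝ) < (1 / 2) ^ i ∧ X i ≠ X' i := by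
        simpa only [AgreeAbove, not_forall, exists_prop] using mt AgreeAbove.branchPt_eq hne
      obtain ⟨z, hyz, hzi⟩ := exists_between (show y < ⟨_, half_pow_mem_unitInterval i⟩ from hi)
      exact ⟨z, hyz, hyz.ne', Or.inr fun h => hXi (h i hzi)⟩
    · obtain ⟨z, hyz, hzy'⟩ := exists_between hlt
      exact ⟨z, hyz, hzy'.ne, Or.inl hzy'.le⟩
  have hheight {X₁ X₂ : ℕ → Bool} {y₁ y₂ : unitInterval} (h : y₁ ≠ y₂) :
      branchPt X₁ y₁ ∉ ({branchPt X₂ y₂} : Set (ℝ × ℝ)) :=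
    fun heq => h (Subtype.ext (congrArg Prod.snd heq))
  refine ⟨branchPt X z, fun h => ?_⟩
  exact (branchPt_mem_of_isPreconnected h (sdiff_subset.trans hC) (bot_le.trans_lt hyz) hyz.le
    ⟨hp, hheight hyz.ne⟩ ⟨hp', hheight hzy'.symm⟩ hor).2 rfl

/-- The arc of the branch `X` between the heights `y` and `z`. -/
def branchArc (X : ℕ → Bool) (y z : unitInterval) : Set (ℝ × ℝ) :=
  (fun w : unitInterval => branchPt X w) '' Icc y z

theorem isPreconnected_branchArc (X : ℕ → Bool) (y z : unitInterval) :
    IsPreconnected (branchArc X y z) :=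
  isPreconnected_Icc.image _ ((continuous_branchPt X).comp continuous_subtype_val).continuousOn

theorem IsRootClosed.branchArc_subset (hY : IsRootClosed Y) {y : unitInterval}
    (hy : branchPt X y ∈ Y) (z : unitInterval) : branchArc X y z ⊆ Y :=
  image_subset_iff.2 fun _ hw => hY hw.1 hy

theorem IsRootClosed.isPreconnected (hY : IsRootClosed Y) (hsub : Y ⊆ range branchMap) :
    IsPreconnected Y := by
  refine isPreconnected_of_forall (psiPt []) fun p hp => ?_
  obtain ⟨⟨X, y⟩, rfl⟩ := hsub hp
  exact ⟨branchArc X y 1, hY.branchArc_subset hp 1, ⟨1, ⟨y.2.2, le_rfl⟩, branchPt_one X⟩,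
    ⟨y, ⟨le_rfl, y.2.2⟩, rfl⟩, isPreconnected_branchArc X y 1⟩

theorem exists_pos_eventually_le {y : unitInterval} {V : Set unitInterval} (hV : V ∈ 𝓝 y) :
    ∃ z ∈ V, 0 < z ∧ ∀ᶠ y' in 𝓝 y, y' ≤ z := by
  obtain rfl | hy := (show y ≤ 1 from y.2.2).eq_or_lt
  · exact ⟨1, mem_of_mem_nhds hV, zero_lt_one, Eventually.of_forall fun y' => y'.2.2⟩
  · have := nhdsGT_neBot_of_exists_gt ⟨1, hy⟩
    obtain ⟨z, hz, hyz⟩ : (V ∩ Ioi y).Nonempty :=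
      Filter.nonempty_of_mem (inter_mem (mem_nhdsWithin_of_mem_nhds hV) self_mem_nhdsWithin)
    exact ⟨z, hz, bot_le.trans_lt hyz, (eventually_lt_nhds hyz).mono fun _ => le_of_lt⟩

-- Nearby branches agree above a height `z` slightly larger than `y`, so that a nearby point is
-- reached by first going up to height `z` and then down again.
theorem IsRootClosed.eventually_exists_isPreconnected (hY : IsRootClosed Y) {y : unitInterval}
    (hy : branchPt X y ∈ Y) {U : Set (ℝ × ℝ)} (hU : U ∈ 𝓝 (branchPt X y)) :
    ∀ᶠ q in 𝓝 (X, y), branchMap q ∈ Y →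
      ∃ C ⊆ Y ∩ U, IsPreconnected C ∧ branchPt X y ∈ C ∧ branchMap q ∈ C := by
  obtain ⟨A, hA, V, hV, hAV⟩ := mem_nhds_prod_iff.1
    (continuous_branchMap.continuousAt.preimage_mem_nhds (x := (X, y)) hU)
  have hV' : ordConnectedComponent V y ∈ 𝓝 y := ordConnectedComponent_mem_nhds.2 hV
  obtain ⟨z, hzV, hz, hle⟩ := exists_pos_eventually_le hV'
  have harc {X' : ℕ → Bool} {y' : unitInterval} (hX' : X' ∈ A)
      (hy' : y' ∈ ordConnectedComponent V y) : branchArc X' y' z ⊆ U :=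
    image_subset_iff.2 fun w hw => hAV (show (X', w) ∈ A ×ˢ V from
      ⟨hX', ordConnectedComponent_subset (OrdConnected.out inferInstance hy' hzV hw)⟩)
  filter_upwards [prod_mem_nhds (inter_mem hA ((isClopen_setOf_agreeAbove hz X).2.mem_nhds
    (AgreeAbove.refl _ X))) (inter_mem hV' hle)] with ⟨X', y'⟩ ⟨⟨hX'A, hX'⟩, hy'V, hy'z⟩ hq
  refine ⟨branchArc X y z ∪ branchArc X' y' z, union_subset
    (subset_inter (hY.branchArc_subset hy z) (harc (mem_of_mem_nhds hA) (mem_of_mem_nhds hV')))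
    (subset_inter (hY.branchArc_subset hq z) (harc hX'A hy'V)), ?_,
    Or.inl ⟨y, ⟨le_rfl, hle.self_of_nhds⟩, rfl⟩, Or.inr ⟨y', ⟨le_rfl, hy'z⟩, rfl⟩⟩
  exact IsPreconnected.union (branchPt X z) ⟨z, ⟨hle.self_of_nhds, le_rfl⟩, rfl⟩
    ⟨z, ⟨hy'z, le_rfl⟩, hX'.branchPt_eq.symm⟩ (isPreconnected_branchArc X y z)
    (isPreconnected_branchArc X' y' z)

theorem IsRootClosed.locallyConnectedSpace (hY : IsRootClosed Y) (hsub : Y ⊆ range branchMap) :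
    LocallyConnectedSpace Y := by
  refine locallyConnectedSpace_coe_of_eventually_isPreconnected fun p hp U hU => ?_
  have hfiber : ∀ q₀ ∈ branchMap ⁻¹' {p}, ∀ᶠ q in 𝓝 q₀, branchMap q ∈ Y →
      ∃ C ⊆ Y ∩ U, IsPreconnected C ∧ p ∈ C ∧ branchMap q ∈ C := by
    rintro ⟨X, y⟩ rfl
    exact hY.eventually_exists_isPreconnected hp hU
  refine eventually_nhdsWithin_iff.2
    ((isClosedMap_branchMap.eventually_nhds_fiber p hfiber).mono fun p' h hp' => ?_)
  obtain ⟨q, rfl⟩ := hsub hp'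
  exact h q rfl hp'

theorem IsRootClosed.isDendrite (hY : IsRootClosed Y) (hcompact : IsCompact Y)
    (hne : Y.Nonempty) (hsub : Y ⊆ range branchMap) : IsDendrite Y :=
  ⟨⟨hcompact, hne, hY.isPreconnected hsub⟩, hY.locallyConnectedSpace hsub, fun _ hC =>
    isEmpty_homeomorph_unitCircle_of_exists_cut
      (exists_not_isPreconnected_sdiff_singleton (hC.trans hsub))⟩

theorem isDendrite_psiSet {T : Set (List Bool)} (hT : IsTreeOfStrings T) (hne : T.Nonempty) :
    IsDendrite (PsiSet T) :=
  (isRootClosed_psiSet hT hne).isDendrite (isCompact_psiSet hT)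
    ((hne.image psiPt).mono (subset_union_left.trans subset_closure))
    (psiSet_subset_range_branchMap hT)

end RootClosed

section Stretch

variable {h y : ℝ} {n : ℕ}

/-- The largest power of two not exceeding `h`, extended by `0` to `h ≤ 0`. -/
def dyadicFloor (h : ℝ) : ℝ := if 0 < h then 2 ^ Int.log 2 h else 0

theorem dyadicFloor_of_pos (hh : 0 < h) : dyadicFloor h = 2 ^ Int.log 2 h := if_pos hh

theorem dyadicFloor_of_nonpos (hh : h ≤ 0) : dyadicFloor h = 0 := if_neg hh.not_gt

theorem dyadicFloor_nonneg (h : ℝ) : 0 ≤ dyadicFloor h := by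
  unfold dyadicFloor; positivity

theorem dyadicFloor_pos (hh : 0 < h) : 0 < dyadicFloor h := by
  rw [dyadicFloor_of_pos hh]; positivity

theorem dyadicFloor_le (hh : 0 ≤ h) : dyadicFloor h ≤ h := by
  obtain rfl | hpos := hh.eq_or_lt
  · exact (dyadicFloor_of_nonpos le_rfl).le
  · exact dyadicFloor_of_pos hpos ▸ Int.zpow_log_le_self one_lt_two hpos

theorem lt_two_mul_dyadicFloor (hh : 0 < h) : h < 2 * dyadicFloor h := by
  rw [dyadicFloor_of_pos hh, mul_comm, ← zpow_add_one₀ two_ne_zero]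
  exact Int.lt_zpow_succ_log_self one_lt_two h

theorem two_mul_dyadicFloor_le_zpow_iff {k : ℤ} : 2 * dyadicFloor h ≤ 2 ^ k ↔ h < 2 ^ k := by
  obtain hh | hh := le_or_gt h 0
  · rw [dyadicFloor_of_nonpos hh, mul_zero]
    exact iff_of_true (by positivity) (hh.trans_lt (by positivity))
  · rw [dyadicFloor_of_pos hh, mul_comm, ← zpow_add_one₀ two_ne_zero,
      zpow_le_zpow_iff_right₀ one_lt_two, Int.add_one_le_iff]
    exact (Int.lt_zpow_iff_log_lt one_lt_two hh).symm

theorem half_pow_eq_zpow (n : ℕ) : (1 / 2 : ℝ) ^ n = 2 ^ (-(n : ℤ)) := by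
  rw [zpow_neg, zpow_natCast, one_div, inv_pow]

theorem two_mul_dyadicFloor_le_half_pow_iff :
    2 * dyadicFloor h ≤ (1 / 2) ^ n ↔ h < (1 / 2) ^ n := by
  rw [half_pow_eq_zpow, two_mul_dyadicFloor_le_zpow_iff]

theorem dyadicFloor_lt_half_pow_iff : dyadicFloor h < (1 / 2) ^ n ↔ h < (1 / 2) ^ n := by
  obtain hh | hh := le_or_gt h 0
  · rw [dyadicFloor_of_nonpos hh]
    exact iff_of_true (half_pow_pos n) (hh.trans_lt (half_pow_pos n))
  · rw [dyadicFloor_of_pos hh, half_pow_eq_zpow, zpow_lt_zpow_iff_right₀ one_lt_two]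
    exact (Int.lt_zpow_iff_log_lt one_lt_two hh).symm

theorem exists_dyadicFloor_eq_half_pow (hh : 0 < h) (hh' : h ≤ 1) :
    ∃ n : ℕ, dyadicFloor h = (1 / 2) ^ n := by
  have hlog : Int.log 2 h < 1 := (Int.lt_zpow_iff_log_lt one_lt_two hh).1 (by norm_num; linarith)
  obtain ⟨n, hn⟩ := Int.eq_ofNat_of_zero_le (neg_nonneg.2 (Int.lt_add_one_iff.1 hlog))
  exact ⟨n, by rw [dyadicFloor_of_pos hh, half_pow_eq_zpow, ← hn, neg_neg]⟩

theorem forall_lt_half_pow_iff_dyadicFloor_le (hh : h ≤ 1) (hy : 0 ≤ y) :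
    (∀ n : ℕ, y < (1 / 2) ^ n → h < (1 / 2) ^ n) ↔ dyadicFloor h ≤ y := by
  refine ⟨fun hlt => ?_, fun hle n hn => dyadicFloor_lt_half_pow_iff.1 (hle.trans_lt hn)⟩
  obtain hpos | hpos := le_or_gt h 0
  · rwa [dyadicFloor_of_nonpos hpos]
  · obtain ⟨n, hn⟩ := exists_dyadicFloor_eq_half_pow hpos hh
    by_contra! hy_lt
    exact (dyadicFloor_le hpos.le).not_gt (hn ▸ hlt n (hn ▸ hy_lt))

/-- A strictly increasing map taking `[dyadicFloor h, 1]` onto `[h, 1]`: affine up to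
`2 * dyadicFloor h`, where it moves `dyadicFloor h` to `h`, and the identity above. -/
def stretch (h y : ℝ) : ℝ :=
  y + max 0 (2 * dyadicFloor h - y) * ((h - dyadicFloor h) / dyadicFloor h)

theorem stretch_coeff_mem_Ico (h : ℝ) : (h - dyadicFloor h) / dyadicFloor h ∈ Ico (0 : ℝ) 1 := by
  obtain hh | hh := le_or_gt h 0
  · simp [dyadicFloor_of_nonpos hh]
  · refine ⟨div_nonneg (sub_nonneg.2 (dyadicFloor_le hh.le)) (dyadicFloor_nonneg h), ?_⟩
    rw [div_lt_one (dyadicFloor_pos hh)]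
    linarith [lt_two_mul_dyadicFloor hh]

theorem strictMono_stretch (h : ℝ) : StrictMono (stretch h) := fun y y' hlt => by
  obtain ⟨hc, hc'⟩ := stretch_coeff_mem_Ico h
  have hmax : max 0 (2 * dyadicFloor h - y) - max 0 (2 * dyadicFloor h - y') ≤ y' - y := by
    rw [sub_le_iff_le_add]
    exact max_le (by positivity [sub_pos.2 hlt])
      (by linarith [le_max_right 0 (2 * dyadicFloor h - y')])
  have hslope := (mul_le_mul_of_nonneg_right hmax hc).trans_lt
    (mul_lt_of_lt_one_right (sub_pos.2 hlt) hc')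
  unfold stretch
  linarith

theorem continuous_stretch (h : ℝ) : Continuous (stretch h) := by
  unfold stretch; fun_prop

theorem le_stretch (h y : ℝ) : y ≤ stretch h y :=
  le_add_of_nonneg_right (mul_nonneg (le_max_left _ _) (stretch_coeff_mem_Ico h).1)

theorem stretch_eq_self (hy : 2 * dyadicFloor h ≤ y) : stretch h y = y := by
  rw [stretch, max_eq_left (sub_nonpos.2 hy), zero_mul, add_zero]

theorem stretch_dyadicFloor (hh : 0 ≤ h) : stretch h (dyadicFloor h) = h := by
  obtain rfl | hpos := hh.eq_or_lt
  · simp [stretch, dyadicFloor_of_nonpos]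
  · have := dyadicFloor_pos hpos
    rw [stretch, two_mul, add_sub_cancel_right, max_eq_right this.le]
    field_simp
    ring

theorem dyadicFloor_one : dyadicFloor 1 = 1 := by simp [dyadicFloor]

theorem stretch_one (hh : h ≤ 1) : stretch h 1 = 1 := by
  obtain rfl | hlt := hh.eq_or_lt
  · simp [stretch, dyadicFloor_one]
  · exact stretch_eq_self (by simpa using two_mul_dyadicFloor_le_half_pow_iff (n := 0).2 (by simpa))

theorem image_stretch_Icc (hh : 0 ≤ h) (hh' : h ≤ 1) :
    stretch h '' Icc (dyadicFloor h) 1 = Icc h 1 := by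
  rw [(continuous_stretch h).continuousOn.image_Icc_of_monotoneOn ((dyadicFloor_le hh).trans hh')
    ((strictMono_stretch h).monotone.monotoneOn _), stretch_dyadicFloor hh, stretch_one hh']

theorem stretch_le_add (hh : 0 ≤ h) (hy : 0 ≤ y) : stretch h y ≤ y + h := by
  obtain rfl | hpos := hh.eq_or_lt
  · rw [stretch_eq_self (by rwa [dyadicFloor_of_nonpos le_rfl, mul_zero]), add_zero]
  have ha := dyadicFloor_pos hpos
  have hmax : max 0 (2 * dyadicFloor h - y) ≤ 2 * dyadicFloor h :=
    max_le (by positivity) (by linarith)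
  calc stretch h y ≤ y + 2 * dyadicFloor h * ((h - dyadicFloor h) / dyadicFloor h) :=
        add_le_add_right (mul_le_mul_of_nonneg_right hmax (stretch_coeff_mem_Ico h).1) y
    _ = y + 2 * (h - dyadicFloor h) := by field_simp
    _ ≤ y + h := by linarith [lt_two_mul_dyadicFloor hpos]

theorem stretch_lt_half_pow_iff (hy : dyadicFloor h ≤ y) :
    stretch h y < (1 / 2) ^ n ↔ y < (1 / 2) ^ n := by
  refine ⟨(le_stretch h y).trans_lt, fun hlt => ?_⟩
  have hle : 2 * dyadicFloor h ≤ (1 / 2) ^ n :=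
    two_mul_dyadicFloor_le_half_pow_iff.2 (dyadicFloor_lt_half_pow_iff.1 (hy.trans_lt hlt))
  exact (strictMono_stretch h hlt).trans_eq (stretch_eq_self hle)

theorem stretch_eq_self_of_le_dyadicFloor (hh : 0 ≤ h) (hle : h ≤ dyadicFloor y) :
    stretch h y = y := by
  have hself : dyadicFloor h = h → stretch h y = y := fun h_eq => by
    rw [stretch, h_eq, sub_self, zero_div, mul_zero, add_zero]
  obtain hy | hy := le_or_gt y 0
  · obtain rfl : h = 0 := le_antisymm (dyadicFloor_of_nonpos hy ▸ hle) hh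
    exact hself (dyadicFloor_of_nonpos le_rfl)
  rw [dyadicFloor_of_pos hy] at hle
  obtain rfl | hlt := hle.eq_or_lt
  · exact hself (by
      rw [dyadicFloor_of_pos (by positivity)]
      exact congrArg _ (Int.log_zpow one_lt_two _))
  · exact stretch_eq_self ((two_mul_dyadicFloor_le_zpow_iff.2 hlt).trans
      (Int.zpow_log_le_self one_lt_two hy))

end Stretch

section Floor

variable {T : Set (List Bool)} {D : Set (ℝ × ℝ)} {X X' : ℕ → Bool}
  {h : (ℕ → Bool) → unitInterval}

/-- `h X` is the height down to which the branch `X` lies in `D`. -/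
def IsFloor (D : Set (ℝ × ℝ)) (h : (ℕ → Bool) → unitInterval) : Prop :=
  ∀ X (y : unitInterval), branchPt X y ∈ D ↔ h X ≤ y

theorem IsRootClosed.exists_isFloor (hD : IsRootClosed D) (hclosed : IsClosed D)
    (hroot : psiPt [] ∈ D) : ∃ h, IsFloor D h := by
  have hleast (X : ℕ → Bool) : ∃ y₀, IsLeast {y : unitInterval | branchPt X y ∈ D} y₀ := by
    have hclosed' : IsClosed {y : unitInterval | branchPt X y ∈ D} :=
      hclosed.preimage ((continuous_branchPt X).comp continuous_subtype_val)
    exact hclosed'.isCompact.exists_isLeast ⟨1, by simpa [branchPt_one] using hroot⟩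
  choose h hh using hleast
  exact ⟨h, fun X y => ⟨fun hy => (hh X).2 hy, fun hle => hD hle (hh X).1⟩⟩

theorem IsFloor.max_eq (hD : IsFloor D h) {z : unitInterval} (hX : AgreeAbove z X X') :
    max (h X) z = max (h X') z := by
  refine eq_of_forall_ge_iff fun y => ?_
  rw [max_le_iff, max_le_iff, and_congr_left_iff]
  intro hzy
  rw [← hD, ← hD, (hX.mono hzy).branchPt_eq]

theorem IsFloor.eventually_max_eq (hD : IsFloor D h) {z : unitInterval} (hz : 0 < z)
    (X : ℕ → Bool) : ∀ᶠ X' in 𝓝 X, max (h X') z = max (h X) z :=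
  eventually_of_mem ((isClopen_setOf_agreeAbove hz X).2.mem_nhds (AgreeAbove.refl _ X))
    fun _ hX' => (hD.max_eq hX').symm

theorem IsFloor.eventually_eq (hD : IsFloor D h) (hX : 0 < h X) : ∀ᶠ X' in 𝓝 X, h X' = h X := by
  obtain ⟨z, hz, hzX⟩ := exists_between hX
  filter_upwards [hD.eventually_max_eq hz X] with X' hX'
  rw [max_eq_left hzX.le, max_eq_iff] at hX'
  exact (hX'.resolve_right fun h => hzX.ne h.1).1

theorem IsFloor.continuous (hD : IsFloor D h) : Continuous h := by
  refine continuous_iff_continuousAt.2 fun X => ?_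
  obtain hX | hX := (show 0 ≤ h X from (h X).2.1).eq_or_lt
  · refine tendsto_order.2 ⟨fun z hz => absurd (hX.trans_gt hz) not_lt_bot, fun z hz => ?_⟩
    obtain ⟨w, hw, hwz⟩ := exists_between hz
    filter_upwards [hD.eventually_max_eq (hX.trans_lt hw) X] with X' hX'
    exact (le_max_left _ w).trans_lt (hX'.trans_lt (max_lt hz hwz))
  · exact continuousAt_const.congr ((hD.eventually_eq hX).mono fun _ => Eq.symm)

/-- The tree whose embedding has the floors `h X` rounded down to dyadic heights: it consists of
the strings `initSeg X m` such that `h X` lies strictly below the heights of all levels `n < m`. -/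
def floorTree (h : (ℕ → Bool) → unitInterval) : Set (List Bool) :=
  {σ | ∃ X m, initSeg X m = σ ∧ ∀ n < m, (h X : ℝ) < (1 / 2) ^ n}

theorem isTreeOfStrings_floorTree (h : (ℕ → Bool) → unitInterval) :
    IsTreeOfStrings (floorTree h) := by
  rintro _ ⟨X, m, rfl, hX⟩ τ hτ
  refine ⟨X, τ.length, (eq_initSeg_of_prefix hτ).symm, fun n hn => hX n (hn.trans_le ?_)⟩
  simpa only [length_initSeg] using hτ.length_le

theorem nonempty_floorTree (h : (ℕ → Bool) → unitInterval) : (floorTree h).Nonempty :=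
  ⟨_, fun _ => false, 0, rfl, fun _ hn => absurd hn (Nat.not_lt_zero _)⟩

theorem IsFloor.initSeg_mem_floorTree_iff (hD : IsFloor D h) {m : ℕ} :
    initSeg X m ∈ floorTree h ↔ ∀ n < m, (h X : ℝ) < (1 / 2) ^ n := by
  refine ⟨?_, fun hX => ⟨X, m, rfl, hX⟩⟩
  rintro ⟨X', m', hseg, hX'⟩ n hn
  obtain rfl : m' = m := by simpa only [length_initSeg] using congrArg List.length hseg
  have hmax := hD.max_eq (z := ⟨_, half_pow_mem_unitInterval m'⟩)
    (agreeAbove_half_pow_of_initSeg_eq hseg)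
  have hlt : max (h X') ⟨_, half_pow_mem_unitInterval m'⟩ < ⟨_, half_pow_mem_unitInterval n⟩ :=
    max_lt (hX' n hn) (half_pow_lt_half_pow_iff.2 hn)
  exact (le_max_left _ _).trans_lt (hmax ▸ hlt)

theorem IsFloor.floorTree_subset (hD : IsFloor D h) (hT : IsTreeOfStrings T) (hne : T.Nonempty)
    (hsub : D ⊆ PsiSet T) : floorTree h ⊆ T := by
  rintro _ ⟨X, m, rfl, hX⟩
  cases m with
  | zero => exact hT.nil_mem hne
  | succ n =>
    exact (branchPt_mem_psiSet_iff hT hne).1 (hsub ((hD X (h X)).2 le_rfl)) n (hX n n.lt_succ_self)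

theorem IsFloor.branchPt_mem_psiSet_floorTree_iff (hD : IsFloor D h) {y : unitInterval} :
    branchPt X y ∈ PsiSet (floorTree h) ↔ dyadicFloor (h X) ≤ y := by
  rw [branchPt_mem_psiSet_iff (isTreeOfStrings_floorTree h) (nonempty_floorTree h),
    ← forall_lt_half_pow_iff_dyadicFloor_le (h X).2.2 y.2.1]
  refine forall₂_congr fun n hn => ?_
  rw [hD.initSeg_mem_floorTree_iff]
  exact ⟨fun hX => hX n n.lt_succ_self, fun hX m hm =>
    hX.trans_le (half_pow_anti (Nat.lt_succ_iff.1 hm))⟩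

theorem IsFloor.stretch_congr (hD : IsFloor D h) {y : unitInterval} (hX : AgreeAbove y X X') :
    stretch (h X) y = stretch (h X') y := by
  let z : unitInterval :=
    ⟨dyadicFloor y, dyadicFloor_nonneg y, (dyadicFloor_le y.2.1).trans y.2.2⟩
  have hz : max (h X) z = max (h X') z :=
    hD.max_eq fun i hi => hX i (dyadicFloor_lt_half_pow_iff.1 hi)
  by_cases heq : h X = h X'
  · rw [heq]
  have hle : h X ≤ z ∧ h X' ≤ z := by grind
  rw [stretch_eq_self_of_le_dyadicFloor (h X).2.1 hle.1,
    stretch_eq_self_of_le_dyadicFloor (h X').2.1 hle.2]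

theorem IsFloor.branchPt_stretch_eq_iff (hD : IsFloor D h) {y y' : unitInterval}
    (hy : dyadicFloor (h X) ≤ y) : branchPt X (stretch (h X) y) = branchPt X' (stretch (h X') y') ↔
      branchPt X y = branchPt X' y' := by
  rw [branchPt_eq_iff (y.2.1.trans (le_stretch _ _)), branchPt_eq_iff y.2.1]
  constructor
  · rintro ⟨heq, hX⟩
    have hagree : AgreeAbove y X X' := fun i hi => hX i ((stretch_lt_half_pow_iff hy).2 hi)
    rw [hD.stretch_congr hagree] at heq
    exact ⟨(strictMono_stretch _).injective heq, hagree⟩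
  · rintro ⟨heq, hX⟩
    rw [← heq]
    exact ⟨hD.stretch_congr hX, hX.mono (le_stretch _ _)⟩

theorem IsFloor.continuous_uncurry_stretch (hD : IsFloor D h) :
    Continuous fun q : (ℕ → Bool) × unitInterval => stretch (h q.1) q.2 := by
  refine continuous_iff_continuousAt.2 fun ⟨X, y⟩ => ?_
  obtain hX | hX := (show 0 ≤ h X from (h X).2.1).eq_or_lt
  · have hlower : Continuous fun q : (ℕ → Bool) × unitInterval => (q.2 : ℝ) := by fun_prop
    have hupper : Continuous fun q : (ℕ → Bool) × unitInterval => (q.2 + h q.1 : ℝ) :=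
      hlower.add (continuous_subtype_val.comp (hD.continuous.comp continuous_fst))
    have hvalue : stretch (h X) y = y := le_antisymm
      (by simpa [← hX] using stretch_le_add (h X).2.1 y.2.1) (le_stretch _ _)
    have hvalue' : (y + h X : ℝ) = stretch (h X) y := by
      rw [hvalue, ← hX, Icc.coe_zero, add_zero]
    exact tendsto_of_tendsto_of_tendsto_of_le_of_le (hlower.tendsto' (X, y) _ hvalue.symm)
      (hupper.tendsto' (X, y) _ hvalue') (fun q => le_stretch _ _)
      fun q => stretch_le_add (h q.1).2.1 q.2.2.1
  · have hcont : Continuous fun q : (ℕ → Bool) × unitInterval => stretch (h X) q.2 :=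
      (continuous_stretch _).comp (continuous_subtype_val.comp continuous_snd)
    refine hcont.continuousAt.congr ?_
    filter_upwards [continuousAt_fst.eventually (hD.eventually_eq hX)] with q hq
    rw [hq]

theorem IsFloor.nonempty_homeomorph_psiSet_floorTree (hD : IsFloor D h)
    (hsub : D ⊆ range branchMap) : Nonempty (D ≃ₜ PsiSet (floorTree h)) := by
  let S := PsiSet (floorTree h)
  have hfloor (q : branchMap ⁻¹' S) : dyadicFloor (h q.1.1) ≤ q.1.2 :=
    hD.branchPt_mem_psiSet_floorTree_iff.1 q.2
  have himage (X : ℕ → Bool) := image_stretch_Icc (h X).2.1 (h X).2.2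
  have hmem (q : branchMap ⁻¹' S) : branchPt q.1.1 (stretch (h q.1.1) q.1.2) ∈ D := by
    have hq : stretch (h q.1.1) q.1.2 ∈ Icc (h q.1.1 : ℝ) 1 :=
      himage q.1.1 ▸ mem_image_of_mem _ ⟨hfloor q, q.1.2.2.2⟩
    exact (hD q.1.1 ⟨_, (h q.1.1).2.1.trans hq.1, hq.2⟩).2 hq.1
  have : CompactSpace (branchMap ⁻¹' S) := isCompact_iff_compactSpace.1
    (isClosed_closure.preimage continuous_branchMap).isCompact
  refine nonempty_homeomorph_of_same_fibers (κ := branchMap ⁻¹' S)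
    (u := fun q => ⟨_, hmem q⟩) (v := fun q => ⟨branchMap q, q.2⟩) ?_ ?_ ?_ ?_ fun q q' => ?_
  · exact (continuous_uncurry_branchPt.comp ((continuous_fst.prodMk
      hD.continuous_uncurry_stretch).comp continuous_subtype_val)).subtype_mk _
  · exact (continuous_branchMap.comp continuous_subtype_val).subtype_mk _
  · rintro ⟨p, hp⟩
    obtain ⟨⟨X, y⟩, rfl⟩ := hsub hp
    obtain ⟨w, ⟨hw, hw1⟩, hwy⟩ := (himage X).ge ⟨(hD X y).1 hp, y.2.2⟩
    exact ⟨⟨(X, ⟨w, (dyadicFloor_nonneg _).trans hw, hw1⟩),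
      hD.branchPt_mem_psiSet_floorTree_iff.2 hw⟩, Subtype.ext (congrArg (branchPt X) hwy)⟩
  · rintro ⟨p, hp⟩
    obtain ⟨q, rfl⟩ := psiSet_subset_range_branchMap (isTreeOfStrings_floorTree h) hp
    exact ⟨⟨q, hp⟩, rfl⟩
  · simp only [Subtype.mk.injEq]
    exact hD.branchPt_stretch_eq_iff (hfloor q)

end Floor

theorem exists_homeomorph_psiSet_of_isPreconnected {T : Set (List Bool)} (hT : IsTreeOfStrings T)
    (hne : T.Nonempty) {D : Set (ℝ × ℝ)} (hroot : psiPt [] ∈ D) (hsub : D ⊆ PsiSet T)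
    (hclosed : IsClosed D) (hconn : IsPreconnected D) :
    ∃ S : Set (List Bool), S.Nonempty ∧ IsTreeOfStrings S ∧ S ⊆ T ∧ Nonempty (D ≃ₜ PsiSet S) := by
  have hrange : D ⊆ range branchMap := hsub.trans (psiSet_subset_range_branchMap hT)
  obtain ⟨h, hh⟩ :=
    (isRootClosed_of_isPreconnected hconn hrange hroot).exists_isFloor hclosed hroot
  exact ⟨floorTree h, nonempty_floorTree h, isTreeOfStrings_floorTree h,
    hh.floorTree_subset hT hne hsub, hh.nonempty_homeomorph_psiSet_floorTree hrange⟩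

end

theorem dendrite_subset_of_psiSet_iff_homeomorphic_subtree
    (T : Set (List Bool)) (hT : IsTreeOfStrings T)
    (D : Set (ℝ × ℝ)) (hroot : psiPt [] ∈ D) (hsub : D ⊆ PsiSet T) :
    IsDendrite D ↔ ∃ S : Set (List Bool), S.Nonempty ∧ IsTreeOfStrings S ∧ S ⊆ T ∧
      Nonempty (↥D ≃ₜ ↥(PsiSet S)) := by
  have hne : T.Nonempty := by
    by_contra! hempty
    simpa [PsiSet, hempty] using hsub hroot
  constructor
  · rintro ⟨⟨hcompact, hconn⟩, -⟩
    exact exists_homeomorph_psiSet_of_isPreconnected hT hne hroot hsub hcompact.isClosed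
      hconn.isPreconnected
  · rintro ⟨S, hSne, hS, -, ⟨e⟩⟩
    exact (isDendrite_psiSet hS hSne).of_homeomorph e
end
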